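/- Let N ≥ 2, K ≥ 1, M ≥ 1, and let L = [l_{ij}] be an N×N real symmetric matrix with l_{ij} = −a_{ij} for i ≠ j and l_{ii} = Σ_{j≠i} a_{ij}, where a_{ij} = a_{ji} ≥ 0 and a_{ii} = 0; assume L·𝟙 = 0, L is positive semidefinite, and there is λ₂ > 0 with vᵀLv ≥ λ₂‖v‖² for all v ∈ ℝ^N with 𝟙ᵀv = 0. Let x : ℝ → (ℝ^K)^M be a trajectory of the chain of M integrators: (x^{(m)})′(t) = x^{(m+1)}(t) for m < M−1 and (x^{(M−1)})′(t) = 0. For each agent i let Ψ_i : ℝ × (ℝ^K)^M → (K×K real symmetric matrices) be continuous, let y_i(t) = Ψ_i(t, x(t))·x^{(0)}(t), and let the observer states x̂_i : ℝ → (ℝ^K)^M satisfy (x̂_i^{(m)})′(t) = x̂_i^{(m+1)}(t) + k_{m+1}·δ_i(t) for m < M−1 and (x̂_i^{(M−1)})′(t) = k_M·δ_i(t), where δ_i(t) = y_i(t) − Ψ_i(t, x(t))·x̂_i^{(0)}(t) − α·Σ_{j=1}^N a_{ij}·(x̂_i^{(0)}(t) − x̂_j^{(0)}(t)), with positive gains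 k₁, …, k_M and α > 0. Suppose: (i) there exist δ > 0 and γ > 0 such that for all t ≥ t₀, (1/N)·Σ_{i=1}^N Ψ_i(t, x(t)) − (μ + γ)·I_K is positive definite, where μ = δ if M = 1 and μ = (δk₁ + k₂)/k₁² if M ≥ 2; (ii) there is ψ ≥ 0 with ‖(1/γ)·Ψ(t)² − Ψ(t)‖ ≤ ψ for all t ≥ t₀, where Ψ(t) = diag(Ψ₁(t,x(t)), …, Ψ_N(t,x(t))), and α > (μ + ψ)/λ₂; and (iii) if M ≥ 3, the matrix Q̄ = Σ̄ + Σ̄ᵀ is positive definite, where Σ̄ is the M×M matrix with entries Σ̄_{ij} = c_{M−1} if i = 1, Σ̄_{ij} = c_{M−i} − c_{M−i+1} if 2 ≤ i ≤ j < M, Σ̄_{ij} = −c_{M−j} if i = j+1, Σ̄_{MM} = δ, Σ̄_{ij} = 0 if i > j+1, with c_l = k_{l+1}/k_l. Then there exist c > 0 and λ > 0 such that for all t ≥ t₀, Σ_{i=1}^N Σ_{m=0}^{M−1} ‖x^{(m)}(t) − x̂_i^{(m)}(t)‖² ≤ c·exp(−2λ(t − t₀))·Σ_{i=1}^N Σ_{m=0}^{M−1}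 ‖x^{(m)}(t₀) − x̂_i^{(m)}(t₀)‖². -/

import Mathlib

/-!
Write `n = M - 1`, `c l = k (l + 1) / k l`, and for each agent and coordinate let `w m` be the
`m`-th error divided by `k (m + 1)`. In the increments `z 0 = w 0`, `z m = w m - w (m - 1)` the
innovation enters only the equation of `z 0`, while `z m' = -y m` for `1 ≤ m ≤ n`, where
`y m = c m * w m - c (m + 1) * w (m + 1)` (`flux`). Splitting the output errors into mean and
disagreement shows that the innovation operator is at least `μ` (`innovation_coercive`), so that
`∑ z 0 * z 0' ≤ ∑ (-δ z 0 ^ 2 + c 1 * z 0 * z 1)`. A Lyapunov function `z 0 ^ 2 + zᵀ P z`, with `P`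
acting on the increments `z 1, …, z n`, decays exponentially as soon as
`δ z 0 ^ 2 - c 1 * z 0 * z 1 + ∑ P i j z i y j` is positive definite (`exponential_decay`).

The matrix inequality on the gain ratios says that the form `lmiForm` is positive definite. For
`P = 1` its cross terms are not those needed, so for `n ≥ 3` the matrix `P` comes from a
Kalman–Yakubovich–Popov argument (`kyp`): by convex separation it exists as soon as
`δ |z 0|² - c 1 * Re (conj (z 0) * z 1) > 0` for every nonzero complex `z` with
`z m + y m = ζ (z m - y m)`, `|ζ| = 1`. For `ζ ≠ ±1` this means `z m = i u y m` with `u` real and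
nonzero. Such a vector is determined by `w 3` and the ratio `y 3 / w 3`, since the recursion gives
`w 2, w 1, w 0` back. Testing `lmiForm` on vectors that agree with a multiple of `z` from index `4`
on confines `y 3 / w 3` to a disk (`resonance_disk`), and its block in `z 0, z 1, z 2` bounds `δ`
from below (`leading_block`). What is left is a quadratic inequality on a disk whose discriminant
is a polynomial in three positive variables, shown positive by an explicit sum-of-squares type
certificate (`cert_pos`, `circle_real`). Finally `P` is positive definite, because its eigenvectors
can be tested in both inequalities (`exists_posDef_multiplier`).
-/

open Matrix

/-- The spectral (ℓ²-operator) norm of a real square matrix. -/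
noncomputable def specNorm {ι : Type*} [Fintype ι] [DecidableEq ι]
    (A : Matrix ι ι ℝ) : ℝ :=
  ‖Matrix.toEuclideanCLM (𝕜 := ℝ) A‖

/-! ### A polynomial inequality -/

/-- Like the one-variable inequalities after it: `[0, ∞)` is subdivided, and the polynomial has
nonnegative coefficients in the Bernstein basis of each bounded piece and in powers of `x - r` on
the last piece `[r, ∞)`. -/
lemma cert_a0 (x : ℝ) (hx : 0 ≤ x) : 0 ≤
    (12/5) + (-16) * x + (229/5) * x ^ 2 + (302/5) * x ^ 3 + (-60) * x ^ 4 + (306/5) * x ^ 5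
    + (-4229/20) * x ^ 6 + (757/5) * x ^ 7 + (-1701/100) * x ^ 8 + (-81/50) * x ^ 9 +
    (231/400) * x ^ 10 := by
  rcases le_total x (1/2) with h0 | h0
  · have hb := sub_nonneg.2 h0
    refine le_of_le_of_eq (b :=
      (12288/5) * x ^ 0 * ((1/2) - x) ^ 10 + 16384 * x ^ 1 * ((1/2) - x) ^ 9 + (242944/5)
      * x ^ 2 * ((1/2) - x) ^ 8 + (507648/5) * x ^ 3 * ((1/2) - x) ^ 7 + (1032704/5) * x ^
      4 * ((1/2) - x) ^ 6 + (1924928/5) * x ^ 5 * ((1/2) - x) ^ 5 + (2620204/5) * x ^ 6 *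
      ((1/2) - x) ^ 4 + (2322136/5) * x ^ 7 * ((1/2) - x) ^ 3 + (6289499/25) * x ^ 8 *
      ((1/2) - x) ^ 2 + (1886957/25) * x ^ 9 * ((1/2) - x) ^ 1 + (3838919/400) * x ^ 10 *
      ((1/2) - x) ^ 0) ?_ ?_
    · positivity
    · ring
  rcases le_total x (5/4) with h1 | h1
  · have hb := sub_nonneg.2 h1
    have ha := sub_nonneg.2 h0
    refine le_of_le_of_eq (b :=
      (245690816/1476225) * (x - (1/2)) ^ 0 * ((5/4) - x) ^ 10 + (3243904448/1476225) * (x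
      - (1/2)) ^ 1 * ((5/4) - x) ^ 9 + (680678288/54675) * (x - (1/2)) ^ 2 * ((5/4) - x) ^
      8 + (3882102976/98415) * (x - (1/2)) ^ 3 * ((5/4) - x) ^ 7 + (7530328072/98415) * (x
      - (1/2)) ^ 4 * ((5/4) - x) ^ 6 + (1020904856/10935) * (x - (1/2)) ^ 5 * ((5/4) - x)
      ^ 5 + (6962145202/98415) * (x - (1/2)) ^ 6 * ((5/4) - x) ^ 4 + (3130199884/98415) *
      (x - (1/2)) ^ 7 * ((5/4) - x) ^ 3 + (358846477/43740) * (x - (1/2)) ^ 8 * ((5/4) -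
      x) ^ 2 + (380890223/236196) * (x - (1/2)) ^ 9 * ((5/4) - x) ^ 1 +
      (1631510467/4723920) * (x - (1/2)) ^ 10 * ((5/4) - x) ^ 0) ?_ ?_
    · positivity
    · ring
  have ha := sub_nonneg.2 h1
  refine le_of_le_of_eq (b :=
    (1631510467/83886080) * (x - (5/4)) ^ 0 + (289910007/2097152) * (x - (5/4)) ^ 1 +
    (4845905599/5242880) * (x - (5/4)) ^ 2 + (376546561/163840) * (x - (5/4)) ^ 3 +
    (86801455/32768) * (x - (5/4)) ^ 4 + (31302681/20480) * (x - (5/4)) ^ 5 +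
    (4089987/10240) * (x - (5/4)) ^ 6 + (16337/640) * (x - (5/4)) ^ 7 + (34371/6400) * (x -
    (5/4)) ^ 8 + (4479/800) * (x - (5/4)) ^ 9 + (231/400) * (x - (5/4)) ^ 10) ?_ ?_
  · positivity
  · ring

lemma cert_ad (x : ℝ) (hx : 0 ≤ x) : 0 ≤
    (6412/5) + (18316/25) * x + (398107/25) * x ^ 2 + (-336486/25) * x ^ 3 + (560312/25) * x
    ^ 4 + (-437007/50) * x ^ 5 + (-87737/50) * x ^ 6 + (-21949) * x ^ 7 + (2735639/400) * x
    ^ 8 + (33726/25) * x ^ 9 + (150341/25) * x ^ 10 + (-5472/5) * x ^ 11 + (876/5) * x ^ 12 := by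
  rcases le_total x (5/4) with h0 | h0
  · have hb := sub_nonneg.2 h0
    refine le_of_le_of_eq (b :=
      (107575508992/1220703125) * x ^ 0 * ((5/4) - x) ^ 12 + (1367728979968/1220703125) *
      x ^ 1 * ((5/4) - x) ^ 11 + (10032262414336/1220703125) * x ^ 2 * ((5/4) - x) ^ 10 +
      (9311789514752/244140625) * x ^ 3 * ((5/4) - x) ^ 9 + (5783768006656/48828125) * x ^
      4 * ((5/4) - x) ^ 8 + (316114742288384/1220703125) * x ^ 5 * ((5/4) - x) ^ 7 +
      (500271582181376/1220703125) * x ^ 6 * ((5/4) - x) ^ 6 +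
      (566727262845952/1220703125) * x ^ 7 * ((5/4) - x) ^ 5 + (86631414485232/244140625)
      * x ^ 8 * ((5/4) - x) ^ 4 + (7832036316224/48828125) * x ^ 9 * ((5/4) - x) ^ 3 +
      (38924738860592/1220703125) * x ^ 10 * ((5/4) - x) ^ 2 + (1487861187808/1220703125)
      * x ^ 11 * ((5/4) - x) ^ 1 + (1183886411116/1220703125) * x ^ 12 * ((5/4) - x) ^ 0) ?_ ?_
    · positivity
    · ring
  have ha := sub_nonneg.2 h0
  refine le_of_le_of_eq (b :=
    (295971602779/20971520) * (x - (5/4)) ^ 0 + (794923484099/6553600) * (x - (5/4)) ^ 1 +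
    (2517369223209/3276800) * (x - (5/4)) ^ 2 + (930172814541/409600) * (x - (5/4)) ^ 3 +
    (1526177655033/409600) * (x - (5/4)) ^ 4 + (48365457043/12800) * (x - (5/4)) ^ 5 +
    (15900336839/6400) * (x - (5/4)) ^ 6 + (171761701/160) * (x - (5/4)) ^ 7 +
    (486225401/1600) * (x - (5/4)) ^ 8 + (5775079/100) * (x - (5/4)) ^ 9 + (451657/50) * (x
    - (5/4)) ^ 10 + (7668/5) * (x - (5/4)) ^ 11 + (876/5) * (x - (5/4)) ^ 12) ?_ ?_
  · positivity
  · ring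

lemma cert_b0 (x : ℝ) (hx : 0 ≤ x) : 0 ≤
    (9/25) + 6 * x + (-9) * x ^ 2 + (1584/25) * x ^ 3 + (-973/4) * x ^ 4 + (1714/5) * x ^ 5
    + (-7383/50) * x ^ 6 + (-30) * x ^ 7 + 13 * x ^ 8 + 10 * x ^ 9 + (3/10) * x ^ 10 := by
  rcases le_total x 1 with h0 | h0
  · have hb := sub_nonneg.2 h0
    refine le_of_le_of_eq (b :=
      (9/25) * x ^ 0 * (1 - x) ^ 10 + (48/5) * x ^ 1 * (1 - x) ^ 9 + (306/5) * x ^ 2 * (1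
      - x) ^ 8 + (6264/25) * x ^ 3 * (1 - x) ^ 7 + (52787/100) * x ^ 4 * (1 - x) ^ 6 +
      (27829/50) * x ^ 5 * (1 - x) ^ 5 + (33679/100) * x ^ 6 * (1 - x) ^ 4 + (5079/25) * x
      ^ 7 * (1 - x) ^ 3 + (2541/20) * x ^ 8 * (1 - x) ^ 2 + (1949/50) * x ^ 9 * (1 - x) ^
      1 + (591/100) * x ^ 10 * (1 - x) ^ 0) ?_ ?_
    · positivity
    · ring
  have ha := sub_nonneg.2 h0
  refine le_of_le_of_eq (b :=
    (591/100) * (x - 1) ^ 0 + (503/25) * (x - 1) ^ 1 + (2109/50) * (x - 1) ^ 2 + (2979/25) *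
    (x - 1) ^ 3 + (8777/20) * (x - 1) ^ 4 + (22261/25) * (x - 1) ^ 5 + (45467/50) * (x - 1)
    ^ 6 + 470 * (x - 1) ^ 7 + (233/2) * (x - 1) ^ 8 + 13 * (x - 1) ^ 9 + (3/10) * (x - 1) ^
    10) ?_ ?_
  · positivity
  · ring

lemma cert_b1 (x : ℝ) (hx : 0 ≤ x) : 0 ≤
    6 + (202/5) * x + (-202/5) * x ^ 2 + (-167/2) * x ^ 3 + (616/5) * x ^ 4 + (212/5) * x ^
    5 + (-981/10) * x ^ 6 + (137/5) * x ^ 7 + (89/5) * x ^ 8 + 10 * x ^ 9 + (3/10) * x ^ 10 := by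
  rcases le_total x (3/4) with h0 | h0
  · have hb := sub_nonneg.2 h0
    refine le_of_le_of_eq (b :=
      (2097152/19683) * x ^ 0 * ((3/4) - x) ^ 10 + (157810688/98415) * x ^ 1 * ((3/4) - x)
      ^ 9 + (302907392/32805) * x ^ 2 * ((3/4) - x) ^ 8 + (185688064/6561) * x ^ 3 *
      ((3/4) - x) ^ 7 + (1725079552/32805) * x ^ 4 * ((3/4) - x) ^ 6 + (2074660864/32805)
      * x ^ 5 * ((3/4) - x) ^ 5 + (557626496/10935) * x ^ 6 * ((3/4) - x) ^ 4 +
      (305588288/10935) * x ^ 7 * ((3/4) - x) ^ 3 + (67350544/6561) * x ^ 8 * ((3/4) - x)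
      ^ 2 + (234109672/98415) * x ^ 9 * ((3/4) - x) ^ 1 + (11281925/39366) * x ^ 10 *
      ((3/4) - x) ^ 0) ?_ ?_
    · positivity
    · ring
  have ha := sub_nonneg.2 h0
  refine le_of_le_of_eq (b :=
    (33845775/2097152) * (x - (3/4)) ^ 0 + (47938453/1310720) * (x - (3/4)) ^ 1 +
    (114991783/655360) * (x - (3/4)) ^ 2 + (8011111/20480) * (x - (3/4)) ^ 3 +
    (11540851/20480) * (x - (3/4)) ^ 4 + (1950079/2560) * (x - (3/4)) ^ 5 + (896523/1280) *
    (x - (3/4)) ^ 6 + (28151/80) * (x - (3/4)) ^ 7 + (14863/160) * (x - (3/4)) ^ 8 + (49/4)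
    * (x - (3/4)) ^ 9 + (3/10) * (x - (3/4)) ^ 10) ?_ ?_
  · positivity
  · ring

lemma cert_b2 (x : ℝ) (hx : 0 ≤ x) : 0 ≤
    (172/5) + (1653/25) * x + (-134) * x ^ 2 + (31/5) * x ^ 3 + (3914/25) * x ^ 4 + (-606/5)
    * x ^ 5 + (-221/10) * x ^ 6 + (287/5) * x ^ 7 + (24/5) * x ^ 8 := by
  rcases le_total x 1 with h0 | h0
  · have hb := sub_nonneg.2 h0
    refine le_of_le_of_eq (b :=
      (172/5) * x ^ 0 * (1 - x) ^ 8 + (8533/25) * x ^ 1 * (1 - x) ^ 7 + (32301/25) * x ^ 2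
      * (1 - x) ^ 6 + (62928/25) * x ^ 3 * (1 - x) ^ 5 + (72494/25) * x ^ 4 * (1 - x) ^ 4
      + (53191/25) * x ^ 5 * (1 - x) ^ 3 + (47869/50) * x ^ 6 * (1 - x) ^ 2 + (6022/25) *
      x ^ 7 * (1 - x) ^ 1 + (2409/50) * x ^ 8 * (1 - x) ^ 0) ?_ ?_
    · positivity
    · ring
  have ha := sub_nonneg.2 h0
  refine le_of_le_of_eq (b :=
    (2409/50) * (x - 1) ^ 0 + (3614/25) * (x - 1) ^ 1 + (31013/50) * (x - 1) ^ 2 +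
    (31406/25) * (x - 1) ^ 3 + (78203/50) * (x - 1) ^ 4 + (6102/5) * (x - 1) ^ 5 + (5141/10)
    * (x - 1) ^ 6 + (479/5) * (x - 1) ^ 7 + (24/5) * (x - 1) ^ 8) ?_ ?_
  · positivity
  · ring

lemma cert_b3 (x : ℝ) (hx : 0 ≤ x) : 0 ≤
    (167/2) + (137/4) * x + (-1761/10) * x ^ 2 + (653/5) * x ^ 3 + (-79) * x ^ 4 + 16 * x ^
    5 + (41/2) * x ^ 6 := by
  rcases le_total x (5/4) with h0 | h0
  · have hb := sub_nonneg.2 h0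
    refine le_of_le_of_eq (b :=
      (342016/15625) * x ^ 0 * ((5/4) - x) ^ 6 + (2227456/15625) * x ^ 1 * ((5/4) - x) ^ 5
      + (7808/25) * x ^ 2 * ((5/4) - x) ^ 4 + (1026112/3125) * x ^ 3 * ((5/4) - x) ^ 3 +
      (19728/125) * x ^ 4 * ((5/4) - x) ^ 2 + (175136/15625) * x ^ 5 * ((5/4) - x) ^ 1 +
      (330897/31250) * x ^ 6 * ((5/4) - x) ^ 0) ?_ ?_
    · positivity
    · ring
  have ha := sub_nonneg.2 h0
  refine le_of_le_of_eq (b :=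
    (330897/8192) * (x - (5/4)) ^ 0 + (163511/1024) * (x - (5/4)) ^ 1 + (1628819/2560) * (x
    - (5/4)) ^ 2 + (125821/160) * (x - (5/4)) ^ 3 + (16047/32) * (x - (5/4)) ^ 4 + (679/4) *
    (x - (5/4)) ^ 5 + (41/2) * (x - (5/4)) ^ 6) ?_ ?_
  · positivity
  · ring

lemma cert_b4 (x : ℝ) (hx : 0 ≤ x) : 0 ≤
    (1415/16) + (-521/10) * x + (-206/25) * x ^ 2 + (-31) * x ^ 3 + 26 * x ^ 4 := by
  rcases le_total x (1/2) with h0 | h0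
  · have hb := sub_nonneg.2 h0
    refine le_of_le_of_eq (b :=
      1415 * x ^ 0 * ((1/2) - x) ^ 4 + (26216/5) * x ^ 1 * ((1/2) - x) ^ 3 + (180166/25) *
      x ^ 2 * ((1/2) - x) ^ 2 + (107042/25) * x ^ 3 * ((1/2) - x) ^ 1 + (23231/25) * x ^ 4
      * ((1/2) - x) ^ 0) ?_ ?_
    · positivity
    · ring
  rcases le_total x (3/2) with h1 | h1
  · have hb := sub_nonneg.2 h1
    have ha := sub_nonneg.2 h0
    refine le_of_le_of_eq (b :=
      (23231/400) * (x - (1/2)) ^ 0 * ((3/2) - x) ^ 4 + (4043/25) * (x - (1/2)) ^ 1 *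
      ((3/2) - x) ^ 3 + (24191/200) * (x - (1/2)) ^ 2 * ((3/2) - x) ^ 2 + (503/50) * (x -
      (1/2)) ^ 3 * ((3/2) - x) ^ 1 + (7499/400) * (x - (1/2)) ^ 4 * ((3/2) - x) ^ 0) ?_ ?_
    · positivity
    · ring
  have ha := sub_nonneg.2 h1
  refine le_of_le_of_eq (b :=
    (7499/400) * (x - (3/2)) ^ 0 + (6493/100) * (x - (3/2)) ^ 1 + (10163/50) * (x - (3/2)) ^
    2 + 125 * (x - (3/2)) ^ 3 + 26 * (x - (3/2)) ^ 4) ?_ ?_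
  · positivity
  · ring

lemma cert_quad' {κ A h V : ℝ} (hκ : 0 < κ) (hd : 0 < A * κ - h ^ 2) :
    0 < A - 2 * h * V + κ * V ^ 2 := by
  refine pos_of_mul_pos_right (a := κ) ?_ hκ.le
  nlinarith [sq_nonneg (κ * V - h)]

lemma cert_quad {κ A h V : ℝ} (hκ : 0 < κ) (hd : 0 ≤ A * κ - h ^ 2) :
    0 ≤ A - 2 * h * V + κ * V ^ 2 := by
  refine nonneg_of_mul_nonneg_right (a := κ) ?_ hκ
  nlinarith [sq_nonneg (κ * V - h)]

/-- The certificate: as a cubic in `W` with coefficients in `ℝ[x, g]`, the left side equals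
`(x c - q W)² + W (B₁ - 4 (2 + x) c h W + 4 (2 + x)² c² κ W²) + B₂ W²` with
`κ = (1 + g) (c + 4 g)`. The polynomials `h`, `q` below are chosen so that `B₂ ≥ 0` and
`B₁ κ > h²`; expanding both in powers of `g` reduces this to polynomials in `x`. -/
lemma cert_pos (x g W : ℝ) (hx : 0 < x) (hg : 0 < g) (hW : 0 < W) : 0 <
    x ^ 2 * ((1 + x) ^ 2 + g) ^ 2 + W * (
      (1 + 4 * x + 2 * x ^ 2 + (-16) * x ^ 3 + (-36) * x ^ 4 + (-36) * x ^ 5 + (-22) * x ^ 6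
      + (-8) * x ^ 7 + (-1) * x ^ 8) + (8 + 20 * x + 2 * x ^ 2 + (-36) * x ^ 3 + (-56) * x ^
      4 + (-36) * x ^ 5 + (-6) * x ^ 6) * g ^ 1 + (18 + 28 * x + 6 * x ^ 2 + (-20) * x ^ 3 +
      (-4) * x ^ 4) * g ^ 2 + (16 + 12 * x + 6 * x ^ 2) * g ^ 3 + (5) * g ^ 4)
    + W ^ 2 * (
      ((-4) + (-32) * x + (-91) * x ^ 2 + (-120) * x ^ 3 + (-64) * x ^ 4 + 24 * x ^ 5 + 66 *
      x ^ 6 + 56 * x ^ 7 + 28 * x ^ 8 + 8 * x ^ 9 + 1 * x ^ 10) + ((-32) + (-200) * x +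
      (-380) * x ^ 2 + (-288) * x ^ 3 + (-32) * x ^ 4 + 120 * x ^ 5 + 116 * x ^ 6 + 48 * x ^
      7 + 8 * x ^ 8) * g ^ 1 + ((-72) + (-344) * x + (-418) * x ^ 2 + (-248) * x ^ 3 + (-16)
      * x ^ 4 + 48 * x ^ 5 + 18 * x ^ 6) * g ^ 2 + ((-64) + (-216) * x + (-124) * x ^ 2 +
      (-16) * x ^ 3 + 16 * x ^ 4) * g ^ 3 + ((-20) + (-40) * x + 5 * x ^ 2) * g ^ 4)
    + W ^ 3 * (4 * (2 + x) ^ 2 * ((1 + x) ^ 2 + g) ^ 2 * ((1 + g) * ((1 + x) ^ 2 + 5 * g))) := by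
  obtain ⟨A₁, hA₁⟩ : ∃ A₁, A₁ =
      (1 + 4 * x + 2 * x ^ 2 + (-16) * x ^ 3 + (-36) * x ^ 4 + (-36) * x ^ 5 + (-22) * x ^ 6
      + (-8) * x ^ 7 + (-1) * x ^ 8) + (8 + 20 * x + 2 * x ^ 2 + (-36) * x ^ 3 + (-56) * x ^
      4 + (-36) * x ^ 5 + (-6) * x ^ 6) * g ^ 1 + (18 + 28 * x + 6 * x ^ 2 + (-20) * x ^ 3 +
      (-4) * x ^ 4) * g ^ 2 + (16 + 12 * x + 6 * x ^ 2) * g ^ 3 + (5) * g ^ 4 := ⟨_, rfl⟩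
  obtain ⟨A₂, hA₂⟩ : ∃ A₂, A₂ =
      ((-4) + (-32) * x + (-91) * x ^ 2 + (-120) * x ^ 3 + (-64) * x ^ 4 + 24 * x ^ 5 + 66 *
      x ^ 6 + 56 * x ^ 7 + 28 * x ^ 8 + 8 * x ^ 9 + 1 * x ^ 10) + ((-32) + (-200) * x +
      (-380) * x ^ 2 + (-288) * x ^ 3 + (-32) * x ^ 4 + 120 * x ^ 5 + 116 * x ^ 6 + 48 * x ^
      7 + 8 * x ^ 8) * g ^ 1 + ((-72) + (-344) * x + (-418) * x ^ 2 + (-248) * x ^ 3 + (-16)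
      * x ^ 4 + 48 * x ^ 5 + 18 * x ^ 6) * g ^ 2 + ((-64) + (-216) * x + (-124) * x ^ 2 +
      (-16) * x ^ 3 + 16 * x ^ 4) * g ^ 3 + ((-20) + (-40) * x + 5 * x ^ 2) * g ^ 4 := ⟨_, rfl⟩
  obtain ⟨h, hh⟩ : ∃ h, h = 5 * g ^ 3 + g ^ 2 * (29 / 4 + 59 / 5 * x)
      + g * (5 + 27 / 2 * x + 9 * x ^ 2)
      + (4 / 5 + 35 / 2 * x ^ 2 - 48 / 5 * x ^ 3) := ⟨_, rfl⟩
  obtain ⟨q, hq⟩ : ∃ q, q = 4 * x + 12 * x ^ 2 - 15 / 2 * x ^ 3 + 37 / 5 * x ^ 4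
      + 13 / 20 * x ^ 5 + g * (11 * x + 9 / 2 * x ^ 2 + 4 * x ^ 3) := ⟨_, rfl⟩
  obtain ⟨c, hc⟩ : ∃ c, c = (1 + x) ^ 2 + g := ⟨_, rfl⟩
  obtain ⟨κ, hκ⟩ : ∃ κ, κ = (1 + g) * ((1 + x) ^ 2 + 5 * g) := ⟨_, rfl⟩
  have hκ0 : 0 < κ := by rw [hκ]; positivity
  have h1 : 0 ≤ A₂ + 4 * (2 + x) * c * h - q ^ 2 := by
    obtain ⟨p0, hp0⟩ : ∃ p0, p0 =
        (12/5) + (-16) * x + (229/5) * x ^ 2 + (302/5) * x ^ 3 + (-60) * x ^ 4 + (306/5) *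
        x ^ 5 + (-4229/20) * x ^ 6 + (757/5) * x ^ 7 + (-1701/100) * x ^ 8 + (-81/50) * x
        ^ 9 + (231/400) * x ^ 10 := ⟨_, rfl⟩
    obtain ⟨p1, hp1⟩ : ∃ p1, p1 =
        (72/5) + (56/5) * x + 94 * x ^ 2 + (-894/5) * x ^ 3 + (763/5) * x ^ 4 + (-353/10)
        * x ^ 5 + (951/10) * x ^ 6 + (-341/20) * x ^ 7 + (14/5) * x ^ 8 := ⟨_, rfl⟩
    obtain ⟨p2, hp2⟩ : ∃ p2, p2 =
        26 + (117/5) * x + (-61) * x ^ 2 + (-466/5) * x ^ 3 + (-1541/20) * x ^ 4 + 12 * x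
        ^ 5 + 2 * x ^ 6 := ⟨_, rfl⟩
    obtain ⟨p3, hp3⟩ : ∃ p3, p3 =
        34 + (37/5) * x + (16/5) * x ^ 2 + 4 * x ^ 3 + 16 * x ^ 4 := ⟨_, rfl⟩
    have e : A₂ + 4 * (2 + x) * c * h - q ^ 2
        = p0 + g * (p1 + p2 * g + p3 * g ^ 2) + 5 * (x - 2) ^ 2 * g ^ 4 := by
      rw [hA₂, hc, hh, hq, hp0, hp1, hp2, hp3]; ring
    have h0 : 0 ≤ p0 := by rw [hp0]; exact cert_a0 x hx.le
    have h3 : 0 < p3 := by rw [hp3]; positivity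
    have hd : 0 ≤ 4 * p1 * p3 - p2 ^ 2 :=
      (cert_ad x hx.le).trans_eq (by rw [hp1, hp2, hp3]; ring)
    have hm : 0 ≤ p1 + p2 * g + p3 * g ^ 2 := by
      have := cert_quad (κ := p3) (A := p1) (h := -(p2 / 2)) (V := g) h3 (by linarith)
      linarith
    rw [e]; positivity
  have h2 : 0 < (A₁ + 2 * x * c * q) * κ - h ^ 2 := by
    have b0 := cert_b0 x hx.le
    have b1 := mul_nonneg hg.le (cert_b1 x hx.le)
    have b2 := mul_nonneg (pow_nonneg hg.le 2) (cert_b2 x hx.le)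
    have b3 := mul_nonneg (pow_nonneg hg.le 3) (cert_b3 x hx.le)
    have b4 := mul_nonneg (pow_nonneg hg.le 4) (cert_b4 x hx.le)
    have b5 : 0 < g ^ 5 * ((75/2) + (-48) * x + 35 * x ^ 2) := by
      have : 0 < (75/2) + (-48) * x + 35 * x ^ 2 := by
        nlinarith only [sq_nonneg (x - 24 / 35)]
      positivity
    have e := add_pos_of_nonneg_of_pos (add_nonneg (add_nonneg (add_nonneg (add_nonneg
      b0 b1) b2) b3) b4) b5
    refine e.trans_eq ?_
    rw [hA₁, hc, hh, hq, hκ]; ring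
  have h3 : 0 < A₁ + 2 * x * c * q - 2 * h * (2 * (2 + x) * c * W)
      + κ * (2 * (2 + x) * c * W) ^ 2 := by
    exact cert_quad' hκ0 h2
  rw [← hA₁, ← hA₂, ← hκ, ← hc]
  have e := add_pos_of_pos_of_nonneg (add_pos_of_nonneg_of_pos (sq_nonneg (x * c - q * W))
    (mul_pos hW h3)) (mul_nonneg (sq_nonneg W) h1)
  refine e.trans_eq ?_
  ring

/-! ### The frequency-domain inequality in real coordinates -/

lemma quad_pos {A B₁ B₂ C a b : ℝ} (hA : 0 < A) (hD : 0 < A * C - B₁ ^ 2 - B₂ ^ 2) :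
    0 < A * (a ^ 2 + b ^ 2) + 2 * a * B₁ - 2 * b * B₂ + C := by
  refine pos_of_mul_pos_right (a := A) ?_ hA.le
  nlinarith only [sq_nonneg (A * a + B₁), sq_nonneg (A * b - B₂), hD]

set_option maxHeartbeats 2000000 in
/-- Discriminant inequality for `circle_real`. With `d₁ = l (1 + g)`, `d₂ = l x²`, `e = 2 l x` and
`u = v / (x l)` it becomes `cert_pos` at `W = v ^ 2`, up to a positive factor. -/
lemma circle_det (x g l v : ℝ) (hx : 0 < x) (hg : 0 < g) (hl : 0 < l) (hv : v ≠ 0)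
    (d₁ d₂ e c c₂ δ u U y τ α β B₁ B₂ : ℝ) (hd₁ : d₁ = l * (1 + g)) (hd₂ : d₂ = l * x ^ 2)
    (he : e = l * (2 * x)) (hc : c = d₁ + d₂ + e) (hc₂ : c₂ = d₂ + e)
    (hδ : δ = c ^ 2 * d₂ / (4 * d₁ * d₂ - e ^ 2)) (hu : u = v / (x * l)) (hU : U = u ^ 2)
    (hy : y = U * c * c₂) (hτ : τ = U * c₂ * e * c / (2 * d₁))
    (hα : α = 1 - U * c * d₂) (hβ : β = u * (c - e))
    (hB₁ : B₁ = δ * (-α * u * c - β * (y - 1)) - c / 2 * (α * u * d₁ + β * y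
      + (-U * c * d₂ * u * c + u * d₁ * (y - 1))) - τ * d₁ * (2 * d₂ + e) * u)
    (hB₂ : B₂ = δ * (α * (y - 1) - β * u * c) - c / 2 * (β * u * d₁ - α * y
      + (U * c * d₂ * (y - 1) + U * d₁ * c))) :
    0 < (δ * ((1 - y) ^ 2 + U * c ^ 2) + c * (U * c * d₁ - y + y ^ 2) + τ * c)
      * (δ * (α ^ 2 + β ^ 2) - c * (α * (U * c * d₂) - β * u * d₁) + τ * d₁ * e ^ 2 * U)
      - B₁ ^ 2 - B₂ ^ 2 := by
  have hC := cert_pos x g (v ^ 2) hx hg (by positivity)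
  have hk : 0 < v ^ 2 * (x + 2) * ((1 + x) ^ 2 + g) ^ 2 * l ^ 2 / ((1 + g) * (4 * g * x ^ 2)) := by
    positivity
  refine (mul_pos hk hC).trans_eq ?_
  have hD4 : 4 * d₁ * d₂ - e ^ 2 = 4 * g * x ^ 2 * l ^ 2 := by
    rw [hd₁, hd₂, he]; ring
  have hcc : c = l * ((1 + x) ^ 2 + g) := by rw [hc, hd₁, hd₂, he]; ring
  have hδ' : δ = l * ((1 + x) ^ 2 + g) ^ 2 / (4 * g) := by
    rw [hδ, hD4, hcc, hd₂]; field_simp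
  have hcc₂ : c₂ = l * x * (x + 2) := by rw [hc₂, hd₂, he]; ring
  obtain ⟨C, hC'⟩ : ∃ C, C = (1 + x) ^ 2 + g := ⟨_, rfl⟩
  rw [← hC'] at hcc hδ'
  have hU' : U = v ^ 2 / (x ^ 2 * l ^ 2) := by rw [hU, hu]; field_simp
  have hy' : y = v ^ 2 * C * (x + 2) / x := by
    rw [hy, hU', hcc, hcc₂]; field_simp
  have hα' : α = 1 - v ^ 2 * C := by rw [hα, hU', hcc, hd₂]; field_simp
  have hβ' : β = v * (C - 2 * x) / x := by rw [hβ, hu, hcc, he]; field_simp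
  have hgne : (1 + g) ≠ 0 := by positivity
  have hτ' : τ = v ^ 2 * (x + 2) * C / (1 + g) := by
    rw [hτ, hU', hcc₂, he, hcc, hd₁]; field_simp
  have hB₁' : B₁ = l * (C ^ 2 / (4 * g) * (-(1 - v ^ 2 * C) * v * C / x
        - v * (C - 2 * x) / x * (v ^ 2 * C * (x + 2) / x - 1))
      - C / 2 * ((1 - v ^ 2 * C) * v * (1 + g) / x + v * (C - 2 * x) / x * (v ^ 2 * C * (x + 2) / x)
        + (-v ^ 2 * C * v * C / x + v * (1 + g) / x * (v ^ 2 * C * (x + 2) / x - 1)))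
      - v ^ 2 * (x + 2) * C * (2 * x ^ 2 + 2 * x) * v / x) := by
    rw [hB₁, hδ', hα', hβ', hτ', hU', hu, hy', hd₁, hd₂, he, hcc]; field_simp
  have hB₂' : B₂ = l * (C ^ 2 / (4 * g) * ((1 - v ^ 2 * C) * (v ^ 2 * C * (x + 2) / x - 1)
        - v * (C - 2 * x) / x * v * C / x)
      - C / 2 * (v * (C - 2 * x) / x * v * (1 + g) / x - (1 - v ^ 2 * C) * (v ^ 2 * C * (x + 2) / x)
        + (v ^ 2 * C * (v ^ 2 * C * (x + 2) / x - 1) + v ^ 2 * (1 + g) * C / x ^ 2))) := by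
    rw [hB₂, hδ', hα', hβ', hU', hu, hy', hd₁, hd₂, hcc]; field_simp
  have hA' : δ * ((1 - y) ^ 2 + U * c ^ 2) + c * (U * c * d₁ - y + y ^ 2) + τ * c
      = l * (C ^ 2 / (4 * g) * ((1 - v ^ 2 * C * (x + 2) / x) ^ 2 + v ^ 2 * C ^ 2 / x ^ 2)
        + C * (v ^ 2 * C * (1 + g) / x ^ 2 - v ^ 2 * C * (x + 2) / x
          + (v ^ 2 * C * (x + 2) / x) ^ 2) + v ^ 2 * (x + 2) * C ^ 2 / (1 + g)) := by
    rw [hδ', hτ', hU', hy', hd₁, hcc]; field_simp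
  have hC0' : δ * (α ^ 2 + β ^ 2) - c * (α * (U * c * d₂) - β * u * d₁) + τ * d₁ * e ^ 2 * U
      = l * (C ^ 2 / (4 * g) * ((1 - v ^ 2 * C) ^ 2 + (v * (C - 2 * x) / x) ^ 2)
        - C * ((1 - v ^ 2 * C) * (v ^ 2 * C) - v * (C - 2 * x) / x * v * (1 + g) / x)
        + 4 * v ^ 4 * (x + 2) * C) := by
    rw [hδ', hα', hβ', hτ', hU', hu, hd₁, hd₂, he, hcc]; field_simp; ring
  rw [hA', hC0', hB₁', hB₂']
  clear hA' hC0' hB₁' hB₂' hB₁ hB₂ hα' hβ' hτ' hy' hU' hδ' hcc hcc₂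
  rw [hC']
  field_simp
  ring

/-- The frequency-domain inequality in real coordinates: the vector is normalised by `w₃ = 1`,
`a + i b` is `u y₃`, `p + i q` is `w₁` and `x₁ + i y₁` is `z₁`. It follows by the S-procedure from
the disk constraint on `a + i b`, with multiplier `τ`, after `δ` is lowered to its infimum `δ₀`. -/
lemma circle_real (d₁ d₂ e c c₂ δ u a b : ℝ) (hd₁ : 0 < d₁) (hd₂ : 0 < d₂) (he : 0 < e)
    (hD : 0 < 4 * d₁ * d₂ - e ^ 2) (hc : c = d₁ + d₂ + e) (hc₂ : c₂ = d₂ + e)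
    (hδ : c ^ 2 * d₂ < δ * (4 * d₁ * d₂ - e ^ 2)) (hu : u ≠ 0)
    (hdisk : c * (a ^ 2 + b ^ 2) ≤ d₁ * (2 * (2 * d₂ + e) * u * a - e ^ 2 * u ^ 2))
    (p q x₁ y₁ : ℝ) (hp : p = 1 + b - u * c₂ * a) (hq : q = -a - u * (c₂ * (1 + b) - e))
    (hx₁ : x₁ = -u * (c * q + c₂ * a)) (hy₁ : y₁ = u * (c * p - c₂ * (1 + b))) :
    0 < δ * ((p - x₁) ^ 2 + (q - y₁) ^ 2) - c * ((p - x₁) * x₁ + (q - y₁) * y₁) := by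
  obtain ⟨δ₀, hδ₀⟩ : ∃ δ₀, δ₀ = c ^ 2 * d₂ / (4 * d₁ * d₂ - e ^ 2) := ⟨_, rfl⟩
  have hδδ : δ₀ ≤ δ := by rw [hδ₀, div_le_iff₀ hD]; exact hδ.le
  have hc0 : 0 < c := by rw [hc]; positivity
  have hc₂0 : 0 < c₂ := by rw [hc₂]; positivity
  obtain ⟨U, hU⟩ : ∃ U, U = u ^ 2 := ⟨_, rfl⟩
  have hU0 : 0 < U := by rw [hU]; positivity
  obtain ⟨y, hy⟩ : ∃ y, y = U * c * c₂ := ⟨_, rfl⟩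
  obtain ⟨τ, hτ⟩ : ∃ τ, τ = U * c₂ * e * c / (2 * d₁) := ⟨_, rfl⟩
  have hτ0 : 0 < τ := by rw [hτ]; positivity
  obtain ⟨α, hα⟩ : ∃ α, α = 1 - U * c * d₂ := ⟨_, rfl⟩
  obtain ⟨β, hβ⟩ : ∃ β, β = u * (c - e) := ⟨_, rfl⟩
  obtain ⟨B₁, hB₁⟩ : ∃ B₁, B₁ = δ₀ * (-α * u * c - β * (y - 1)) - c / 2 * (α * u * d₁ + β * y
      + (-U * c * d₂ * u * c + u * d₁ * (y - 1))) - τ * d₁ * (2 * d₂ + e) * u := ⟨_, rfl⟩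
  obtain ⟨B₂, hB₂⟩ : ∃ B₂, B₂ = δ₀ * (α * (y - 1) - β * u * c) - c / 2 * (β * u * d₁ - α * y
      + (U * c * d₂ * (y - 1) + U * d₁ * c)) := ⟨_, rfl⟩
  have hdet := circle_det (2 * d₂ / e) ((4 * d₁ * d₂ - e ^ 2) / e ^ 2) (e ^ 2 / (4 * d₂))
    (u * (e / 2)) (by positivity) (by positivity) (by positivity) (by positivity)
    d₁ d₂ e c c₂ δ₀ u U y τ α β B₁ B₂ (by field_simp; ring) (by field_simp; ring)
    (by field_simp; ring) hc hc₂ hδ₀ (by field_simp; ring) hU hy hτ hα hβ hB₁ hB₂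
  have hA : 0 < δ₀ * ((1 - y) ^ 2 + U * c ^ 2) + c * (U * c * d₁ - y + y ^ 2) + τ * c := by
    -- `δ₀ ≥ c² / (4 d₁)`, hence `δ₀ + d₁ ≥ c`
    have h1 : c ^ 2 / (4 * d₁) ≤ δ₀ := by
      rw [hδ₀, div_le_div_iff₀ (by positivity) hD]
      nlinarith only [sq_nonneg (c * e)]
    have h2 : c ≤ δ₀ + d₁ := by
      have : c ≤ c ^ 2 / (4 * d₁) + d₁ := by
        rw [← sub_nonneg]
        have : c ^ 2 / (4 * d₁) + d₁ - c = (c - 2 * d₁) ^ 2 / (4 * d₁) := by field_simp; ring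
        rw [this]; positivity
      linarith
    have h3 : 0 ≤ δ₀ := le_trans (by positivity) h1
    have h4 : c * y ≤ U * c ^ 2 * (δ₀ + d₁) := by
      calc c * y = U * c ^ 2 * c₂ := by rw [hy]; ring
        _ ≤ U * c ^ 2 * (δ₀ + d₁) := by
          gcongr
          exact le_trans (by rw [hc, hc₂]; linarith) h2
    have h5 : 0 < c * y ^ 2 := by rw [hy]; positivity
    nlinarith only [h4, h5, mul_nonneg h3 (sq_nonneg (1 - y)), mul_pos hτ0 hc0]
  have hq := quad_pos (a := a) (b := b) hA hdet
  have hs : 0 ≤ τ * (d₁ * (2 * (2 * d₂ + e) * u * a - e ^ 2 * u ^ 2) - c * (a ^ 2 + b ^ 2)) :=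
    mul_nonneg hτ0.le (sub_nonneg.2 hdisk)
  have hd : 0 ≤ (δ - δ₀) * ((p - x₁) ^ 2 + (q - y₁) ^ 2) :=
    mul_nonneg (sub_nonneg.2 hδδ) (by positivity)
  have e1 : δ₀ * ((p - x₁) ^ 2 + (q - y₁) ^ 2) - c * ((p - x₁) * x₁ + (q - y₁) * y₁)
      = ((δ₀ * ((1 - y) ^ 2 + U * c ^ 2) + c * (U * c * d₁ - y + y ^ 2) + τ * c)
        * (a ^ 2 + b ^ 2) + 2 * a * B₁ - 2 * b * B₂
        + (δ₀ * (α ^ 2 + β ^ 2) - c * (α * (U * c * d₂) - β * u * d₁) + τ * d₁ * e ^ 2 * U))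
       + τ * (d₁ * (2 * (2 * d₂ + e) * u * a - e ^ 2 * u ^ 2) - c * (a ^ 2 + b ^ 2)) := by
    have hd₁' : d₁ = c - c₂ := by rw [hc, hc₂]; ring
    have he' : e = c₂ - d₂ := by rw [hc₂]; ring
    clear hdet hA hs hd hdisk hδ₀ hτ hd₁ hD hδ hc hc₂
    rw [hB₁, hB₂, hα, hβ, hy, hU, hx₁, hy₁, hp, ‹q = _›, hd₁', he']
    ring
  linarith

/-! ### Isometries and Gram matrices -/

/-- A linear isometry of a finite-dimensional complex inner product space has an orthonormal
eigenbasis: its hermitian and skew-hermitian parts are commuting, so their joint eigenspaces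
exhaust the space. -/
lemma exists_eigenbasis_of_isometry {E : Type*} [NormedAddCommGroup E] [InnerProductSpace ℂ E]
    [FiniteDimensional ℂ E] (O : E →ₗᵢ[ℂ] E) :
    ∃ (n : ℕ) (b : OrthonormalBasis (Fin n) ℂ E) (ζ : Fin n → ℂ),
      (∀ i, O (b i) = ζ i • b i) ∧ ∀ i, ‖ζ i‖ = 1 := by
  have hsurj : Function.Surjective O :=
    (LinearMap.injective_iff_surjective (f := O.toLinearMap)).mp O.injective
  let U : E ≃ₗᵢ[ℂ] E := LinearIsometryEquiv.ofSurjective O hsurj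
  have hU : ∀ v, U v = O v := fun v => rfl
  have hadj : ∀ v w, inner ℂ (U v) w = inner ℂ v (U.symm w) := fun v w => by
    rw [← U.inner_map_map v (U.symm w), U.apply_symm_apply]
  have hadj' : ∀ v w, inner ℂ (U.symm v) w = inner ℂ v (U w) := fun v w => by
    rw [← U.inner_map_map (U.symm v) w, U.apply_symm_apply]
  let T : E →ₗ[ℂ] E := U.toLinearEquiv.toLinearMap
  let T' : E →ₗ[ℂ] E := U.symm.toLinearEquiv.toLinearMap
  have hT : ∀ v, T v = U v := fun v => rfl
  have hT' : ∀ v, T' v = U.symm v := fun v => rfl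
  let A : E →ₗ[ℂ] E := T + T'
  let B : E →ₗ[ℂ] E := Complex.I • (T - T')
  have hA : A.IsSymmetric := fun v w => by
    simp only [A, LinearMap.add_apply, inner_add_left, inner_add_right, hT, hT', hadj, hadj']
    ring
  have hB : B.IsSymmetric := fun v w => by
    simp only [B, LinearMap.smul_apply, LinearMap.sub_apply, inner_sub_left, inner_sub_right,
      inner_smul_left, inner_smul_right, hT, hT', hadj, hadj', Complex.conj_I]
    ring
  have hAB : Commute A B := by
    ext v
    simp only [A, B, Module.End.mul_apply, LinearMap.add_apply, LinearMap.smul_apply,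
      LinearMap.sub_apply, map_add, map_sub, map_smul, hT, hT', U.apply_symm_apply,
      U.symm_apply_apply]
    module
  have hunit : ∀ (ξ : ℂ) (v : E), O v = ξ • v → v ≠ 0 → ‖ξ‖ = 1 := fun ξ v h hv => by
    have h1 := O.norm_map v
    rw [h, norm_smul] at h1
    exact mul_right_cancel₀ (norm_ne_zero_iff.mpr hv) (by rw [h1, one_mul])
  have htop : (⨆ μ : Module.End.Eigenvalues T, Module.End.eigenspace T μ) = ⊤ := by
    have h := LinearMap.IsSymmetric.iSup_iSup_eigenspace_inf_eigenspace_eq_top_of_commute hA hB hAB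
    rw [eq_top_iff, ← h]
    refine iSup_le fun α => iSup_le fun β v hv => ?_
    obtain ⟨h1, h2⟩ := hv
    have h1' : A v = α • v := Module.End.mem_eigenspace_iff.mp h1
    have h2' : B v = β • v := Module.End.mem_eigenspace_iff.mp h2
    by_cases hv0 : v = 0
    · rw [hv0]; exact zero_mem _
    have h3 : T v = ((α - Complex.I * β) / 2) • v := by
      have : (2 : ℂ) • T v = (α - Complex.I * β) • v := by
        rw [sub_smul, mul_smul, ← h1', ← h2']
        simp only [A, B, LinearMap.add_apply, LinearMap.smul_apply, LinearMap.sub_apply, smul_smul,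
          Complex.I_mul_I]
        module
      rw [div_eq_inv_mul, mul_smul, ← this, smul_smul]
      norm_num
    have hm : v ∈ Module.End.eigenspace T ((α - Complex.I * β) / 2) :=
      Module.End.mem_eigenspace_iff.mpr h3
    have hev : Module.End.HasEigenvalue T ((α - Complex.I * β) / 2) :=
      Module.End.hasEigenvalue_of_hasEigenvector ⟨hm, hv0⟩
    exact Submodule.mem_iSup_of_mem (p := fun μ : Module.End.Eigenvalues T =>
      Module.End.eigenspace T μ) ⟨_, hev⟩ hm
  have horth : OrthogonalFamily ℂ (fun μ : Module.End.Eigenvalues T => Module.End.eigenspace T μ)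
      fun μ => (Module.End.eigenspace T μ).subtypeₗᵢ := by
    rintro ⟨μ, hμ⟩ ⟨ξ, hξ⟩ hne ⟨v, hv⟩ ⟨w, hw⟩
    change inner ℂ v w = 0
    have hv' : O v = μ • v := Module.End.mem_eigenspace_iff.mp hv
    have hw' : O w = ξ • w := Module.End.mem_eigenspace_iff.mp hw
    by_cases hv0 : v = 0
    · simp [hv0]
    have h1 := hunit μ v hv' hv0
    have h2 := O.inner_map_map v w
    rw [hv', hw', inner_smul_left, inner_smul_right] at h2
    by_contra h0
    apply hne
    have h3 : (starRingEnd ℂ) μ * ξ = 1 := by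
      apply mul_right_cancel₀ h0; rw [one_mul, mul_assoc]; exact h2
    have h4 : μ * (starRingEnd ℂ) μ = 1 := by rw [Complex.mul_conj, Complex.normSq_eq_norm_sq, h1]; simp
    have : μ = ξ := by
      calc μ = μ * ((starRingEnd ℂ) μ * ξ) := by rw [h3, mul_one]
        _ = ξ := by rw [← mul_assoc, h4, one_mul]
    exact Subtype.ext this
  have hinternal : DirectSum.IsInternal
      (fun μ : Module.End.Eigenvalues T => Module.End.eigenspace T μ) := by
    classical
    exact horth.isInternal_iff.mpr (by rw [htop, Submodule.top_orthogonal_eq_bot])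
  have hb : ∀ i, O (hinternal.subordinateOrthonormalBasis rfl horth i)
      = ((hinternal.subordinateOrthonormalBasisIndex rfl i horth : Module.End.Eigenvalues T) : ℂ)
        • hinternal.subordinateOrthonormalBasis rfl horth i := fun i =>
    Module.End.mem_eigenspace_iff.mp (hinternal.subordinateOrthonormalBasis_subordinate rfl i horth)
  exact ⟨_, hinternal.subordinateOrthonormalBasis rfl horth, _, hb, fun i => hunit _ _ (hb i)
    ((hinternal.subordinateOrthonormalBasis rfl horth).orthonormal.ne_zero i)⟩

/-- Two finite families with the same Gram matrix differ by a linear isometry. -/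
lemma exists_isometry_of_gram {E κ : Type*} [Fintype κ] [NormedAddCommGroup E]
    [InnerProductSpace ℂ E] [FiniteDimensional ℂ E] (p q : κ → E)
    (h : ∀ i j, inner ℂ (p i) (p j) = inner ℂ (q i) (q j)) :
    ∃ O : E →ₗᵢ[ℂ] E, ∀ i, O (q i) = p i := by
  classical
  let Tp : (κ → ℂ) →ₗ[ℂ] E := Fintype.linearCombination ℂ p
  let Tq : (κ → ℂ) →ₗ[ℂ] E := Fintype.linearCombination ℂ q
  have hin : ∀ c, inner ℂ (Tp c) (Tp c) = inner ℂ (Tq c) (Tq c) := fun c => by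
    simp only [Tp, Tq, Fintype.linearCombination_apply, sum_inner, inner_sum, inner_smul_left,
      inner_smul_right, h]
  have hn : ∀ c, ‖Tp c‖ = ‖Tq c‖ := fun c => by
    rw [@norm_eq_sqrt_re_inner ℂ, @norm_eq_sqrt_re_inner ℂ, hin]
  obtain ⟨s, hs⟩ := Tq.rangeRestrict.exists_rightInverse_of_surjective (LinearMap.range_rangeRestrict Tq)
  have hs' : ∀ v, Tq (s v) = v := fun v => by
    have := congrArg Subtype.val (LinearMap.congr_fun hs v)
    simpa using this
  let Lm : LinearMap.range Tq →ₗᵢ[ℂ] E := ⟨Tp ∘ₗ s, fun v => by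
    rw [LinearMap.comp_apply, hn, hs']; rfl⟩
  refine ⟨Lm.extend, fun i => ?_⟩
  have hqi : Tq (Pi.single i 1) = q i := by simp [Tq]
  have hpi : Tp (Pi.single i 1) = p i := by simp [Tp]
  have h1 := Lm.extend_apply ⟨q i, ⟨_, hqi⟩⟩
  change Lm.extend (q i) = Tp (s ⟨q i, ⟨_, hqi⟩⟩) at h1
  rw [h1, ← hpi, ← sub_eq_zero, ← map_sub, ← norm_eq_zero, hn, map_sub, hs', hqi, sub_self,
    norm_zero]

/-! ### The Kalman–Yakubovich–Popov lemma -/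

open scoped MatrixOrder Matrix.Norms.L2Operator in
lemma posSemidef_eq_transpose_mul {ι : Type*} [Fintype ι] [DecidableEq ι] {G : Matrix ι ι ℝ}
    (hG : G.PosSemidef) : ∃ B : Matrix ι ι ℝ, G = Bᵀ * B := by
  obtain ⟨B, hB⟩ := CStarAlgebra.nonneg_iff_eq_star_mul_self.mp hG.nonneg
  exact ⟨B, by rw [hB, star_eq_conjTranspose, conjTranspose_eq_transpose_of_trivial]⟩

/-- Losslessness of the S-procedure behind the Kalman–Yakubovich–Popov lemma: a positive
semidefinite `G ≠ 0` with `Z G Yᵀ + Y G Zᵀ = 0` is a sum of complex rank-one matrices `z zᴴ` with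
`(Z + Y) z = ζ (Z - Y) z`, `|ζ| = 1`, so a form that is positive on such `z` is positive on `G`. -/
lemma kyp_lossless {ι κ : Type*} [Fintype ι] [DecidableEq ι] [Fintype κ] [DecidableEq κ]
    (Z Y : Matrix κ ι ℝ) (S : Matrix ι ι ℝ)
    (H : ∀ (z : ι → ℂ) (ζ : ℂ), ‖ζ‖ = 1 → z ≠ 0 →
      (∀ i, ∑ j, ((Z i j + Y i j : ℝ) : ℂ) * z j = ζ * ∑ j, ((Z i j - Y i j : ℝ) : ℂ) * z j) →
      0 < ∑ i, ∑ j, S i j * ((starRingEnd ℂ) (z i) * z j).re)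
    (G : Matrix ι ι ℝ) (hG : G.PosSemidef) (hG0 : G ≠ 0) (hC : Z * G * Yᵀ + Y * G * Zᵀ = 0) :
    0 < ∑ i, ∑ j, S i j * G i j := by
  obtain ⟨B, hB⟩ := posSemidef_eq_transpose_mul hG
  let a : ι → EuclideanSpace ℂ ι := fun i => WithLp.toLp 2 (fun r => (B r i : ℂ))
  have haa : ∀ i j, inner ℂ (a i) (a j) = (G i j : ℂ) := fun i j => by
    simp [a, hB, Matrix.mul_apply, PiLp.inner_apply, mul_comm]
  have hgram : ∀ (A : Matrix κ ι ℝ) i j, inner ℂ (∑ k, (A i k : ℂ) • a k) (∑ k, (A j k : ℂ) • a k)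
      = (((A * G * Aᵀ) i j : ℝ) : ℂ) := fun A i j => by
    simp only [sum_inner, inner_sum, inner_smul_left, inner_smul_right, haa, Matrix.mul_apply,
      Matrix.transpose_apply, Complex.conj_ofReal]
    push_cast
    exact Finset.sum_congr rfl fun k _ => mul_comm _ _
  have heq : (Z + Y) * G * (Z + Y)ᵀ = (Z - Y) * G * (Z - Y)ᵀ := by
    rw [← sub_eq_zero]
    calc _ = 2 • (Z * G * Yᵀ + Y * G * Zᵀ) := by
          simp only [Matrix.transpose_add, Matrix.transpose_sub, Matrix.add_mul, Matrix.mul_add,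
            Matrix.sub_mul, Matrix.mul_sub]
          abel
      _ = 0 := by rw [hC, smul_zero]
  obtain ⟨O, hO⟩ := exists_isometry_of_gram (fun i => ∑ k, ((Z + Y) i k : ℂ) • a k)
    (fun i => ∑ k, ((Z - Y) i k : ℂ) • a k) (fun i j => by rw [hgram, hgram, heq])
  obtain ⟨n, b, ζ, hb, hζ⟩ := exists_eigenbasis_of_isometry O
  have hOb : ∀ k v, inner ℂ (b k) (O v) = ζ k * inner ℂ (b k) v := fun k v => by
    have h1 := O.inner_map_map (b k) v
    rw [hb, inner_smul_left] at h1
    have h4 : ζ k * (starRingEnd ℂ) (ζ k) = 1 := by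
      rw [Complex.mul_conj, Complex.normSq_eq_norm_sq, hζ]; simp
    rw [← h1, ← mul_assoc, h4, one_mul]
  have hsum : ∑ i, ∑ j, S i j * G i j = ∑ k, ∑ i, ∑ j, S i j *
      ((starRingEnd ℂ) (inner ℂ (b k) (a i)) * inner ℂ (b k) (a j)).re := by
    rw [Finset.sum_comm]
    conv_rhs => rw [Finset.sum_comm]
    rw [Finset.sum_comm]
    refine Finset.sum_congr rfl fun i _ => ?_
    rw [Finset.sum_comm]
    refine Finset.sum_congr rfl fun j _ => ?_
    rw [← Finset.mul_sum]
    congr 1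
    have h := congrArg Complex.re (b.sum_inner_mul_inner (a i) (a j))
    rw [haa, Complex.ofReal_re, Complex.re_sum] at h
    rw [← h]
    simp only [inner_conj_symm]
  have hpos : ∀ k, (fun i => inner ℂ (b k) (a i)) ≠ 0 → 0 < ∑ i, ∑ j, S i j *
      ((starRingEnd ℂ) (inner ℂ (b k) (a i)) * inner ℂ (b k) (a j)).re := fun k hk => by
    refine H _ (ζ k) (hζ k) hk fun i => ?_
    have h1 := hOb k (∑ l, ((Z - Y) i l : ℂ) • a l)
    have h2 := hO i
    rw [h2] at h1
    simpa only [inner_sum, inner_smul_right, Matrix.add_apply, Matrix.sub_apply] using h1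
  rw [hsum]
  refine Finset.sum_pos' (fun k _ => ?_) ?_
  · by_cases hk : (fun i => inner ℂ (b k) (a i)) = 0
    · have : ∀ i, inner ℂ (b k) (a i) = 0 := fun i => congrFun hk i
      simp [this]
    · exact (hpos k hk).le
  · by_contra! hno
    apply hG0
    have hz : ∀ k, (fun i => inner ℂ (b k) (a i)) = 0 := fun k => by
      by_contra hk
      exact absurd (hpos k hk) (not_lt.mpr (hno k (Finset.mem_univ k)))
    ext i j
    have h := b.sum_inner_mul_inner (a i) (a j)
    rw [haa] at h
    have : ∀ k, inner ℂ (b k) (a j) = 0 := fun k => congrFun (hz k) j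
    simp only [this, mul_zero, Finset.sum_const_zero] at h
    exact_mod_cast h.symm

/-- A discrete-circle form of the Kalman–Yakubovich–Popov lemma: the strict frequency-domain
inequality for the real form `S` yields a symmetric multiplier `P`. -/
lemma kyp {ι κ : Type*} [Fintype ι] [DecidableEq ι] [Fintype κ] [DecidableEq κ]
    (Z Y : Matrix κ ι ℝ) (S : Matrix ι ι ℝ)
    (H : ∀ (z : ι → ℂ) (ζ : ℂ), ‖ζ‖ = 1 → z ≠ 0 →
      (∀ i, ∑ j, ((Z i j + Y i j : ℝ) : ℂ) * z j = ζ * ∑ j, ((Z i j - Y i j : ℝ) : ℂ) * z j) →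
      0 < ∑ i, ∑ j, S i j * ((starRingEnd ℂ) (z i) * z j).re)
    (H0 : ∃ z : ι → ℝ, z ≠ 0 ∧ Z *ᵥ z = 0) :
    ∃ P : Matrix κ κ ℝ, P.IsSymm ∧ ∀ z : ι → ℝ, z ≠ 0 →
      0 < (∑ i, ∑ j, S i j * (z i * z j))
        + ∑ i, ∑ j, P i j * ((Z *ᵥ z) i * (Y *ᵥ z) j) := by
  let 𝒢 : Set (Matrix ι ι ℝ) := {G | G.PosSemidef ∧ G.trace = 1}
  let Φ : Matrix ι ι ℝ →ₗ[ℝ] (κ → κ → ℝ) × ℝ :=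
    { toFun := fun G => (fun i j => (Z * G * Yᵀ + Y * G * Zᵀ) i j, ∑ i, ∑ j, S i j * G i j)
      map_add' := fun G G' => by
        refine Prod.ext (funext fun i => funext fun j => ?_) ?_
        · simp only [Matrix.mul_add, Matrix.add_mul, Prod.fst_add, Pi.add_apply, Matrix.add_apply]
          ring
        · simp only [Matrix.add_apply, mul_add, Finset.sum_add_distrib, Prod.snd_add]
      map_smul' := fun r G => by
        refine Prod.ext (funext fun i => funext fun j => ?_) ?_
        · simp only [Matrix.mul_smul, Matrix.smul_mul, Prod.smul_fst, Pi.smul_apply,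
            Matrix.add_apply, Matrix.smul_apply, smul_add, RingHom.id_apply]
        · simp only [Matrix.smul_apply, smul_eq_mul, Prod.smul_snd, Finset.mul_sum,
            RingHom.id_apply]
          exact Finset.sum_congr rfl fun i _ => Finset.sum_congr rfl fun j _ => by ring }
  have hΦ : ∀ G, Φ G = (fun i j => (Z * G * Yᵀ + Y * G * Zᵀ) i j, ∑ i, ∑ j, S i j * G i j) :=
    fun G => rfl
  have hconv : Convex ℝ 𝒢 := by
    intro G hG G' hG' s t hs ht hst
    refine ⟨(hG.1.smul hs).add (hG'.1.smul ht), ?_⟩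
    rw [Matrix.trace_add, Matrix.trace_smul, Matrix.trace_smul, hG.2, hG'.2]
    simpa using hst
  have hcomp : IsCompact 𝒢 := by
    have h1 : 𝒢 = (fun B : EuclideanSpace ℝ (ι × ι) =>
        ((Matrix.of fun i j => B (i, j))ᵀ * (Matrix.of fun i j => B (i, j)) : Matrix ι ι ℝ)) ''
          Metric.sphere 0 1 := by
      have htr : ∀ B : Matrix ι ι ℝ, (Bᵀ * B).trace = ∑ p : ι × ι, B p.1 p.2 ^ 2 := fun B => by
        rw [Fintype.sum_prod_type, Finset.sum_comm]
        simp [Matrix.trace, Matrix.mul_apply, sq]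
      ext G
      constructor
      · rintro ⟨hG, ht⟩
        obtain ⟨B, rfl⟩ := posSemidef_eq_transpose_mul hG
        refine ⟨WithLp.toLp 2 fun p => B p.1 p.2, ?_, ?_⟩
        · rw [mem_sphere_zero_iff_norm, EuclideanSpace.norm_eq]
          rw [htr] at ht
          simp [ht]
        · rfl
      · rintro ⟨B, hB, rfl⟩
        refine ⟨?_, ?_⟩
        · have := Matrix.posSemidef_conjTranspose_mul_self
            (Matrix.of fun i j => B (i, j) : Matrix ι ι ℝ)
          rwa [conjTranspose_eq_transpose_of_trivial] at this
        · rw [htr]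
          rw [mem_sphere_zero_iff_norm, EuclideanSpace.norm_eq, Real.sqrt_eq_one] at hB
          simpa using hB
    rw [h1]
    refine (isCompact_sphere _ _).image ?_
    refine Continuous.matrix_mul ?_ ?_
    · exact Continuous.matrix_transpose (continuous_matrix fun i j => by simp; fun_prop)
    · exact continuous_matrix fun i j => by simp; fun_prop
  have hcontΦ : Continuous Φ := by
    have : Continuous fun G : Matrix ι ι ℝ =>
        ((fun i j => (Z * G * Yᵀ + Y * G * Zᵀ) i j, ∑ i, ∑ j, S i j * G i j) :
          (κ → κ → ℝ) × ℝ) := by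
      refine Continuous.prodMk (continuous_pi fun i => continuous_pi fun j => ?_) (by fun_prop)
      exact Continuous.matrix_elem (by fun_prop) i j
    exact this
  have hdisj : Disjoint (Φ '' 𝒢) ({0} ×ˢ Set.Iic 0) := by
    rw [Set.disjoint_left]
    rintro _ ⟨G, hG, rfl⟩ ⟨h1, h2⟩
    have hG0 : G ≠ 0 := by
      rintro rfl
      have := hG.2
      simp at this
    have h3 := kyp_lossless Z Y S H G hG.1 hG0 (by
      ext i j
      exact congrFun (congrFun h1 i) j)
    exact absurd h3 (not_lt.mpr h2)
  obtain ⟨f, u, v, hfu, huv, hfv⟩ := geometric_hahn_banach_compact_closed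
    (hconv.linear_image Φ) (hcomp.image hcontΦ) ((convex_singleton 0).prod (convex_Iic 0))
    (isClosed_singleton.prod isClosed_Iic) hdisj
  have hv0 : v < 0 := by
    have := hfv (0, 0) ⟨rfl, Set.mem_Iic.mpr le_rfl⟩
    rwa [Prod.mk_zero_zero, map_zero] at this
  have hfG : ∀ G ∈ 𝒢, f (Φ G) < 0 := fun G hG => (hfu _ ⟨G, hG, rfl⟩).trans (huv.trans hv0)
  have hfz : ∀ z : ι → ℝ, z ≠ 0 → f (Φ (vecMulVec z z)) < 0 := fun z hz => by
    have ht : 0 < ∑ i, z i * z i := by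
      obtain ⟨i, hi⟩ := Function.ne_iff.mp hz
      exact Finset.sum_pos' (fun i _ => mul_self_nonneg _) ⟨i, Finset.mem_univ _,
        mul_self_pos.mpr hi⟩
    have hmem : (∑ i, z i * z i)⁻¹ • vecMulVec z z ∈ 𝒢 := by
      refine ⟨?_, ?_⟩
      · have := Matrix.posSemidef_vecMulVec_self_star z
        rw [star_trivial] at this
        exact this.smul (inv_pos.mpr ht).le
      · rw [Matrix.trace_smul, Matrix.trace_vecMulVec, smul_eq_mul, dotProduct,
          inv_mul_cancel₀ ht.ne']
    have h := hfG _ hmem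
    rw [map_smul, map_smul, smul_eq_mul] at h
    exact neg_of_mul_neg_right h (inv_pos.mpr ht).le
  let F : κ → κ → ℝ := fun i j => f (Pi.single i (Pi.single j 1), 0)
  have hf : ∀ (C : κ → κ → ℝ) (s : ℝ), f (C, s) = (∑ i, ∑ j, F i j * C i j) + f (0, 1) * s := by
    intro C s
    have hC : (C, s) = (∑ i, ∑ j, C i j • ((Pi.single i (Pi.single j 1) : κ → κ → ℝ), (0 : ℝ)))
        + s • ((0 : κ → κ → ℝ), (1 : ℝ)) := by
      refine Prod.ext (funext fun i => funext fun j => ?_) ?_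
      · simp only [Prod.fst_add, Prod.fst_sum, Prod.smul_fst, smul_zero, add_zero,
          Finset.sum_apply, Pi.smul_apply, smul_eq_mul]
        rw [Finset.sum_eq_single i, Finset.sum_eq_single j]
        · simp
        · intro j' _ hj; simp [hj.symm]
        · simp
        · intro i' _ hi
          refine Finset.sum_eq_zero fun j' _ => ?_
          simp [hi.symm]
        · simp
      · simp [Prod.snd_sum]
    rw [hC, map_add, map_sum, map_smul, smul_eq_mul, mul_comm s]
    congr 1
    refine Finset.sum_congr rfl fun i _ => ?_
    rw [map_sum]
    refine Finset.sum_congr rfl fun j _ => ?_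
    rw [map_smul, smul_eq_mul, mul_comm]
  have hΦz : ∀ z : ι → ℝ, Φ (vecMulVec z z) = (fun i j => (Z *ᵥ z) i * (Y *ᵥ z) j
      + (Y *ᵥ z) i * (Z *ᵥ z) j, ∑ i, ∑ j, S i j * (z i * z j)) := fun z => by
    rw [hΦ]
    refine Prod.ext (funext fun i => funext fun j => ?_) rfl
    simp only [Matrix.add_apply, Matrix.mul_vecMulVec, Matrix.vecMulVec_mul,
      Matrix.vecMulVec_apply, Matrix.vecMul_transpose]
  have hτ : f (0, 1) < 0 := by
    obtain ⟨z, hz, hz0⟩ := H0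
    have hle : f (0, 1) ≤ 0 := by
      by_contra! hpos
      have h1 := hfv (0, v / f (0, 1)) ⟨rfl, (div_neg_of_neg_of_pos hv0 hpos).le⟩
      rw [hf] at h1
      simp only [Pi.zero_apply, mul_zero, Finset.sum_const_zero, zero_add] at h1
      rw [mul_div_cancel₀ _ hpos.ne'] at h1
      exact lt_irrefl _ h1
    refine lt_of_le_of_ne hle fun h0 => ?_
    have h := hfz z hz
    rw [hΦz, hf, hz0, h0] at h
    simp at h
  refine ⟨Matrix.of fun i j => (F i j + F j i) / f (0, 1), ?_, fun z hz => ?_⟩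
  · ext i j; simp [add_comm]
  · have h := hfz z hz
    rw [hΦz, hf] at h
    have h2 : (∑ i, ∑ j, F i j * ((Z *ᵥ z) i * (Y *ᵥ z) j + (Y *ᵥ z) i * (Z *ᵥ z) j))
        = f (0, 1) * ∑ i, ∑ j, (Matrix.of fun i j => (F i j + F j i) / f (0, 1)) i j
          * ((Z *ᵥ z) i * (Y *ᵥ z) j) := by
      simp only [mul_add, Finset.sum_add_distrib, Matrix.of_apply, Finset.mul_sum]
      conv_lhs => enter [2]; rw [Finset.sum_comm]
      rw [← Finset.sum_add_distrib]
      refine Finset.sum_congr rfl fun i _ => ?_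
      rw [← Finset.sum_add_distrib]
      refine Finset.sum_congr rfl fun j _ => ?_
      field_simp [hτ.ne]
    rw [h2, ← mul_add, add_comm] at h
    exact (pos_iff_neg_of_mul_neg (by rwa [mul_comm])).mpr hτ

/-! ### The form of the gain ratios -/

/-- Partial sums `w m = z 0 + ⋯ + z m`. -/
def psum {R : Type*} [CommRing R] (z : ℕ → R) (m : ℕ) : R := ∑ j ∈ Finset.range (m + 1), z j

/-- The combination `y m = c m * w m - c (m + 1) * w (m + 1)`, which governs `z m' = -y m`. -/
def flux {R : Type*} [CommRing R] (c z : ℕ → R) (m : ℕ) : R :=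
  c m * psum z m - c (m + 1) * psum z (m + 1)

lemma psum_zero {R : Type*} [CommRing R] (z : ℕ → R) : psum z 0 = z 0 := by simp [psum]

lemma psum_succ {R : Type*} [CommRing R] (z : ℕ → R) (m : ℕ) :
    psum z (m + 1) = psum z m + z (m + 1) := by
  simp [psum, Finset.sum_range_succ]

/-- The quadratic form of the matrix `Σ̄` of gain ratios, in the coordinates `x (n - p)`. -/
def lmiForm (n : ℕ) (c : ℕ → ℝ) (δ : ℝ) (x : ℕ → ℝ) : ℝ :=
  δ * x 0 ^ 2 - c 1 * x 0 * x 1 + c n * x 0 * x n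
    + ∑ m ∈ Finset.range n, x (m + 1) * (flux c x (m + 1) - (c (m + 1) - c (m + 2)) * x 0)

lemma psum_re (z : ℕ → ℂ) (m : ℕ) : (psum z m).re = psum (fun j => (z j).re) m := by
  simp [psum, Complex.re_sum]

lemma psum_im (z : ℕ → ℂ) (m : ℕ) : (psum z m).im = psum (fun j => (z j).im) m := by
  simp [psum, Complex.im_sum]

lemma flux_re (c : ℕ → ℝ) (z : ℕ → ℂ) (m : ℕ) :
    (flux (fun j => (c j : ℂ)) z m).re = flux c (fun j => (z j).re) m := by
  simp [flux, psum_re]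

lemma flux_im (c : ℕ → ℝ) (z : ℕ → ℂ) (m : ℕ) :
    (flux (fun j => (c j : ℂ)) z m).im = flux c (fun j => (z j).im) m := by
  simp [flux, psum_im]

/-- Complexification of the positivity of `lmiForm` on the hyperplane `x 0 = 0`. -/
lemma complex_form_pos {n : ℕ} {c : ℕ → ℝ} {δ : ℝ}
    (hFL : ∀ x : ℕ → ℝ, (∃ m ≤ n, x m ≠ 0) → 0 < lmiForm n c δ x)
    (x : ℕ → ℂ) (hx0 : x 0 = 0) (hx : ∃ m ≤ n, x m ≠ 0) :
    0 < ∑ m ∈ Finset.range n,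
      ((starRingEnd ℂ) (x (m + 1)) * flux (fun j => (c j : ℂ)) x (m + 1)).re := by
  have key : ∀ r : ℕ → ℝ, r 0 = 0 →
      lmiForm n c δ r = ∑ m ∈ Finset.range n, r (m + 1) * flux c r (m + 1) := fun r hr => by
    simp [lmiForm, hr]
  have hnn : ∀ r : ℕ → ℝ, r 0 = 0 →
      0 ≤ ∑ m ∈ Finset.range n, r (m + 1) * flux c r (m + 1) := fun r hr => by
    by_cases h : ∃ m ≤ n, r m ≠ 0
    · rw [← key r hr]; exact (hFL r h).le
    · push Not at h
      refine (Finset.sum_eq_zero fun m hm => ?_).ge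
      rw [h (m + 1) (by simpa using hm), zero_mul]
  have hsum : ∑ m ∈ Finset.range n,
      ((starRingEnd ℂ) (x (m + 1)) * flux (fun j => (c j : ℂ)) x (m + 1)).re
      = (∑ m ∈ Finset.range n, (x (m + 1)).re * flux c (fun j => (x j).re) (m + 1))
        + ∑ m ∈ Finset.range n, (x (m + 1)).im * flux c (fun j => (x j).im) (m + 1) := by
    rw [← Finset.sum_add_distrib]
    refine Finset.sum_congr rfl fun m _ => ?_
    rw [Complex.mul_re, flux_re, flux_im, Complex.conj_re, Complex.conj_im]
    ring
  rw [hsum]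
  obtain ⟨m, hm, hxm⟩ := hx
  have hr := hnn (fun j => (x j).re) (by simp [hx0])
  have hi := hnn (fun j => (x j).im) (by simp [hx0])
  by_cases hre : (x m).re = 0
  · have him : (x m).im ≠ 0 := fun h => hxm (Complex.ext hre h)
    have := hFL (fun j => (x j).im) ⟨m, hm, him⟩
    rw [key _ (by simp [hx0])] at this
    exact add_pos_of_nonneg_of_pos hr this
  · have := hFL (fun j => (x j).re) ⟨m, hm, hre⟩
    rw [key _ (by simp [hx0])] at this
    exact add_pos_of_pos_of_nonneg this hi

/-- The constraints that the leading block of `lmiForm` puts on the gain ratios. -/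
lemma leading_block {n : ℕ} (hn : 3 ≤ n) {c : ℕ → ℝ} {δ : ℝ} (hδ : 0 < δ)
    (hc : ∀ l, 1 ≤ l → l ≤ n → 0 < c l)
    (hFL : ∀ x : ℕ → ℝ, (∃ m ≤ n, x m ≠ 0) → 0 < lmiForm n c δ x) :
    0 < c 1 - c 2 ∧ 0 < c 2 - c 3 ∧ 0 < 4 * (c 1 - c 2) * (c 2 - c 3) - c 3 ^ 2 ∧
      c 1 ^ 2 * (c 2 - c 3) < δ * (4 * (c 1 - c 2) * (c 2 - c 3) - c 3 ^ 2) := by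
  obtain ⟨k, rfl⟩ := Nat.exists_eq_add_of_le' hn
  have key : ∀ s x₁ x₂ : ℝ, (s ≠ 0 ∨ x₁ ≠ 0 ∨ x₂ ≠ 0) →
      0 < δ * s ^ 2 - c 1 * s * x₁ + (c 1 - c 2) * x₁ ^ 2 - c 3 * x₁ * x₂
        + (c 2 - c 3) * x₂ ^ 2 := fun s x₁ x₂ h => by
    let x : ℕ → ℝ := fun m => if m = 0 then s else if m = 1 then x₁ else if m = 2 then x₂ else 0
    have hx := hFL x (by
      rcases h with h | h | h
      · exact ⟨0, by omega, by simpa [x] using h⟩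
      · exact ⟨1, by omega, by simpa [x] using h⟩
      · exact ⟨2, by omega, by simpa [x] using h⟩)
    refine hx.trans_eq ?_
    have htail : ∀ m, x (m + 3) = 0 := fun m => by simp [x]
    rw [lmiForm, Finset.sum_range_succ', Finset.sum_range_succ', Finset.sum_range_succ']
    simp only [htail, flux, psum, Finset.sum_range_succ, Finset.sum_range_zero]
    simp [x]
    ring
  have h1 : 0 < c 1 - c 2 := by simpa using key 0 1 0 (by simp)
  have h2 : 0 < c 2 - c 3 := by simpa using key 0 0 1 (by simp)
  have h3 := hc 3 (by omega) (by omega)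
  have h4 : 0 < 4 * (c 1 - c 2) * (c 2 - c 3) - c 3 ^ 2 := by
    have := key 0 (2 * (c 2 - c 3)) (c 3) (by right; right; exact h3.ne')
    refine pos_of_mul_pos_right (a := c 2 - c 3) ?_ h2.le
    nlinarith only [this]
  refine ⟨h1, h2, h4, ?_⟩
  have := key (c 1 * (c 2 - c 3) / δ) (2 * (c 2 - c 3)) (c 3) (by right; right; exact h3.ne')
  have h5 : (c 1 * (c 2 - c 3) / δ) * δ = c 1 * (c 2 - c 3) := div_mul_cancel₀ _ hδ.ne'
  set s := c 1 * (c 2 - c 3) / δ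
  have h6 : 0 < (c 2 - c 3) * (δ * (4 * (c 1 - c 2) * (c 2 - c 3) - c 3 ^ 2)
      - c 1 ^ 2 * (c 2 - c 3)) := by
    have h7 := mul_pos hδ this
    refine h7.trans_eq ?_
    linear_combination (s * δ - c 1 * (c 2 - c 3)) * h5
  have := pos_of_mul_pos_right h6 h2.le
  linarith

/-- Testing the complexified form on `(0, x₁, x₂, x₃, θ z₄, …, θ zₙ)` confines `y₃ / w₃` to a disk
for every resonant vector `z` (one with `z m = i u y m`). -/
lemma resonance_disk {n : ℕ} (hn : 3 ≤ n) {c : ℕ → ℝ} {δ : ℝ}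
    (hFL : ∀ x : ℕ → ℝ, (∃ m ≤ n, x m ≠ 0) → 0 < lmiForm n c δ x)
    (hD : 0 < 4 * (c 1 - c 2) * (c 2 - c 3) - c 3 ^ 2)
    (z : ℕ → ℂ) (u : ℝ)
    (hz : ∀ m, 1 ≤ m → m ≤ n → z m = Complex.I * u * flux (fun j => (c j : ℂ)) z m)
    (g : ℂ) (hw : psum z 3 ≠ 0) (hg : flux (fun j => (c j : ℂ)) z 3 = g * psum z 3) :
    c 1 * (g.re ^ 2 + g.im ^ 2)
      ≤ (c 1 - c 2) * ((4 * (c 2 - c 3) + 2 * c 3) * g.re - c 3 ^ 2) := by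
  obtain ⟨k, rfl⟩ := Nat.exists_eq_add_of_le' hn
  have key : ∀ x₁ x₂ x₃ : ℂ, x₃ ≠ 0 → 0 < ((starRingEnd ℂ) x₁ * (c 1 * x₁ - c 2 * (x₁ + x₂))
      + (starRingEnd ℂ) x₂ * (c 2 * (x₁ + x₂) - c 3 * (x₁ + x₂ + x₃))
      + (starRingEnd ℂ) x₃ * (g * (x₁ + x₂ + x₃))).re := fun x₁ x₂ x₃ h => by
    obtain ⟨θ, hθ⟩ : ∃ θ, θ = (x₁ + x₂ + x₃) / psum z 3 := ⟨_, rfl⟩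
    have hθ' : θ * psum z 3 = x₁ + x₂ + x₃ := by rw [hθ, div_mul_cancel₀ _ hw]
    let x : ℕ → ℂ := fun m => if m = 0 then 0 else if m = 1 then x₁ else if m = 2 then x₂
      else if m = 3 then x₃ else θ * z m
    have hx0 : x 0 = 0 := by simp [x]
    have hx1 : x 1 = x₁ := by simp [x]
    have hx2 : x 2 = x₂ := by simp [x]
    have hx3 : x 3 = x₃ := by simp [x]
    have hx4 : ∀ m, x (m + 4) = θ * z (m + 4) := fun m => by simp [x]
    have hp1 : psum x 1 = x₁ := by simp [psum, Finset.sum_range_succ, hx0, hx1]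
    have hp2 : psum x 2 = x₁ + x₂ := by rw [psum_succ, hp1, hx2]
    have hp3 : ∀ m, psum x (m + 3) = θ * psum z (m + 3) := by
      intro m
      induction m with
      | zero => rw [zero_add, hθ', psum_succ, hp2, hx3]
      | succ m ih =>
        rw [show m + 1 + 3 = (m + 3) + 1 by ring, psum_succ, ih, psum_succ z (m + 3), hx4]
        ring
    have hf3 : ∀ m, flux (fun j => (c j : ℂ)) x (m + 3)
        = θ * flux (fun j => (c j : ℂ)) z (m + 3) := fun m => by
      rw [flux, flux, hp3, show m + 3 + 1 = (m + 1) + 3 by ring, hp3]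
      ring
    have hpos := complex_form_pos hFL x hx0 ⟨3, by omega, by rwa [hx3]⟩
    rw [Finset.sum_range_succ', Finset.sum_range_succ', Finset.sum_range_succ'] at hpos
    have htail : ∑ m ∈ Finset.range k, ((starRingEnd ℂ) (x (m + 1 + 1 + 1 + 1))
        * flux (fun j => (c j : ℂ)) x (m + 1 + 1 + 1 + 1)).re = 0 := by
      refine Finset.sum_eq_zero fun m hm => ?_
      have hm' : m < k := by simpa using hm
      rw [show m + 1 + 1 + 1 + 1 = m + 4 by ring, hx4, show m + 4 = (m + 1) + 3 by ring, hf3,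
        hz (m + 1 + 3) (by omega) (by omega)]
      generalize flux (fun j => (c j : ℂ)) z (m + 1 + 3) = f
      simp only [map_mul, Complex.conj_I, Complex.conj_ofReal]
      simp
      ring
    rw [htail, zero_add] at hpos
    refine hpos.trans_eq ?_
    have e1 : flux (fun j => (c j : ℂ)) x 1 = c 1 * x₁ - c 2 * (x₁ + x₂) := by
      rw [flux, hp1, hp2]
    have e2 : flux (fun j => (c j : ℂ)) x 2 = c 2 * (x₁ + x₂) - c 3 * (x₁ + x₂ + x₃) := by
      rw [flux, hp2, psum_succ, hp2, hx3]
    have e3 : flux (fun j => (c j : ℂ)) x 3 = g * (x₁ + x₂ + x₃) := by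
      have := hf3 0
      rw [zero_add, hg] at this
      rw [this, ← hθ']; ring
    simp only [zero_add, Nat.reduceAdd]
    rw [hx1, hx2, hx3, e1, e2, e3]
    simp only [Complex.add_re]
    ring
  -- the minimiser of the form over `x₁, x₂` for given `x₃`
  have h := key ⟨-2 * (g.re * (c 2 - c 3) + c 3 / 2 * (g.re - c 3)),
      2 * (g.im * (c 2 - c 3) + c 3 / 2 * g.im)⟩
    ⟨-2 * (c 3 / 2 * g.re + (c 1 - c 2) * (g.re - c 3)),
      2 * (c 3 / 2 * g.im + (c 1 - c 2) * g.im)⟩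
    ((4 * (c 1 - c 2) * (c 2 - c 3) - c 3 ^ 2 : ℝ) : ℂ) (by exact_mod_cast hD.ne')
  simp only [Complex.add_re, Complex.mul_re, Complex.sub_re, Complex.add_im, Complex.mul_im,
    Complex.sub_im, Complex.conj_re, Complex.conj_im, Complex.ofReal_re, Complex.ofReal_im] at h
  have h' : 0 < (4 * (c 1 - c 2) * (c 2 - c 3) - c 3 ^ 2) *
      ((c 1 - c 2) * ((4 * (c 2 - c 3) + 2 * c 3) * g.re - c 3 ^ 2)
        - c 1 * (g.re ^ 2 + g.im ^ 2)) := by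
    refine h.trans_eq ?_
    ring
  have := pos_of_mul_pos_right h' hD.le
  linarith

/-! ### The frequency-domain inequality -/

/-- A nonzero resonant vector has `w₃ ≠ 0`: otherwise its tail would annihilate the complexified
form, and the recursion would make `z` vanish. -/
lemma resonance_psum_ne {n : ℕ} (hn : 3 ≤ n) {c : ℕ → ℝ} {δ : ℝ} (hcn : c (n + 1) = 0)
    (hFL : ∀ x : ℕ → ℝ, (∃ m ≤ n, x m ≠ 0) → 0 < lmiForm n c δ x)
    (z : ℕ → ℂ) (u : ℝ)
    (hz : ∀ m, 1 ≤ m → m ≤ n → z m = Complex.I * u * flux (fun j => (c j : ℂ)) z m)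
    (hne : ∃ m ≤ n, z m ≠ 0) : psum z 3 ≠ 0 := by
  intro hw
  have htail : ∀ m, 4 ≤ m → m ≤ n → z m = 0 := by
    by_contra! hex
    obtain ⟨m₀, hm4, hmn, hm0⟩ := hex
    let x : ℕ → ℂ := fun m => if m ≤ 3 then 0 else z m
    have hx0 : ∀ m, m ≤ 3 → x m = 0 := fun m hm => by simp [x, hm]
    have hx1 : ∀ m, x (m + 4) = z (m + 4) := fun m => by simp [x]
    have hp3 : ∀ m, psum x (m + 3) = psum z (m + 3) := by
      intro m
      induction m with
      | zero =>
        rw [zero_add, hw, psum]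
        exact Finset.sum_eq_zero fun j hj => hx0 j (by simp at hj; omega)
      | succ m ih => rw [show m + 1 + 3 = (m + 3) + 1 by ring, psum_succ, ih, psum_succ z (m + 3),
          hx1]
    have hpos := complex_form_pos hFL x (hx0 0 (by omega)) ⟨m₀, hmn, by
      simpa [x, show ¬ m₀ ≤ 3 by omega] using hm0⟩
    refine hpos.ne' (Finset.sum_eq_zero fun m hm => ?_)
    have hm' : m < n := by simpa using hm
    by_cases h3 : m + 1 ≤ 3
    · rw [hx0 _ h3]; simp
    obtain ⟨j, rfl⟩ := Nat.exists_eq_add_of_le' (show 3 ≤ m by omega)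
    have hf : flux (fun j => (c j : ℂ)) x (j + 3 + 1) = flux (fun j => (c j : ℂ)) z (j + 3 + 1) := by
      rw [flux, flux, show j + 3 + 1 = (j + 1) + 3 by ring, hp3,
        show j + 1 + 3 + 1 = (j + 2) + 3 by ring, hp3]
    rw [hf, hx1, hz (j + 4) (by omega) (by omega)]
    change (_ * flux (fun j => (c j : ℂ)) z (j + 4)).re = 0
    generalize flux (fun j => (c j : ℂ)) z (j + 4) = f
    simp only [map_mul, Complex.conj_I, Complex.conj_ofReal]
    simp
    ring
  have hy3 : flux (fun j => (c j : ℂ)) z 3 = 0 := by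
    rw [flux, psum_succ z 3, hw]
    rcases Nat.lt_or_ge 3 n with h | h
    · simp [htail 4 le_rfl h]
    · have : n = 3 := le_antisymm h hn
      subst this
      simp [hcn]
  have h3 : z 3 = 0 := by rw [hz 3 (by omega) hn, hy3, mul_zero]
  have hw2 : psum z 2 = 0 := by rw [psum_succ, h3, add_zero] at hw; exact hw
  have h2 : z 2 = 0 := by rw [hz 2 (by omega) (by omega), flux, hw, hw2]; simp
  have hw1 : psum z 1 = 0 := by rw [psum_succ, h2, add_zero] at hw2; exact hw2
  have h1 : z 1 = 0 := by rw [hz 1 (by omega) (by omega), flux, hw2, hw1]; simp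
  have hw0 : z 0 = 0 := by rw [psum_succ, h1, add_zero, psum_zero] at hw1; exact hw1
  obtain ⟨m, hm, hzm⟩ := hne
  apply hzm
  rcases Nat.lt_or_ge m 4 with h | h
  · interval_cases m <;> assumption
  · exact htail m h hm

/-- The frequency-domain inequality at the frequencies `u ≠ 0`. -/
lemma resonance_pos {n : ℕ} (hn : 3 ≤ n) {c : ℕ → ℝ} {δ : ℝ} (hδ : 0 < δ)
    (hc : ∀ l, 1 ≤ l → l ≤ n → 0 < c l) (hcn : c (n + 1) = 0)
    (hFL : ∀ x : ℕ → ℝ, (∃ m ≤ n, x m ≠ 0) → 0 < lmiForm n c δ x)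
    (z : ℕ → ℂ) (u : ℝ) (hu : u ≠ 0)
    (hz : ∀ m, 1 ≤ m → m ≤ n → z m = Complex.I * u * flux (fun j => (c j : ℂ)) z m)
    (hne : ∃ m ≤ n, z m ≠ 0) :
    0 < δ * ((starRingEnd ℂ) (z 0) * z 0).re - c 1 * ((starRingEnd ℂ) (z 0) * z 1).re := by
  have hw := resonance_psum_ne hn hcn hFL z u hz hne
  obtain ⟨hd₁, hd₂, hD, hδ'⟩ := leading_block hn hδ hc hFL
  obtain ⟨g, hg⟩ : ∃ g, flux (fun j => (c j : ℂ)) z 3 = g * psum z 3 :=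
    ⟨_, (div_mul_cancel₀ _ hw).symm⟩
  have hdisk := resonance_disk hn hFL hD z u hz g hw hg
  have key := circle_real (c 1 - c 2) (c 2 - c 3) (c 3) (c 1) (c 2) δ u (u * g.re) (u * g.im)
    hd₁ hd₂ (hc 3 (by omega) hn) hD (by ring) (by ring) hδ' hu
    (by nlinarith only [mul_le_mul_of_nonneg_left hdisk (sq_nonneg u)]) _ _ _ _ rfl rfl rfl rfl
  set p := 1 + u * g.im - u * c 2 * (u * g.re) with hp
  set q := -(u * g.re) - u * (c 2 * (1 + u * g.im) - c 3) with hq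
  set x₁ := -u * (c 1 * q + c 2 * (u * g.re)) with hx₁
  set y₁ := u * (c 1 * p - c 2 * (1 + u * g.im)) with hy₁
  have e3 := hz 3 (by omega) hn
  have e2 := hz 2 (by omega) (by omega)
  have e1 := hz 1 (by omega) (by omega)
  rw [hg] at e3
  have w2 : psum z 2 = (⟨1 + u * g.im, -(u * g.re)⟩ : ℂ) * psum z 3 := by
    have h : psum z 3 = psum z 2 + z 3 := psum_succ z 2
    rw [eq_sub_of_add_eq h.symm, e3]
    have : (⟨1 + u * g.im, -(u * g.re)⟩ : ℂ) = 1 - Complex.I * u * g := by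
      apply Complex.ext <;> simp
    rw [this]; ring
  have w1 : psum z 1 = (⟨p, q⟩ : ℂ) * psum z 3 := by
    have h : psum z 2 = psum z 1 + z 2 := psum_succ z 1
    rw [eq_sub_of_add_eq h.symm, e2, flux, w2]
    have : (⟨p, q⟩ : ℂ) = (⟨1 + u * g.im, -(u * g.re)⟩ : ℂ)
        - Complex.I * u * (c 2 * (⟨1 + u * g.im, -(u * g.re)⟩ : ℂ) - c 3) := by
      apply Complex.ext <;> simp [hp, hq]
      ring
    rw [this]; ring
  have z1 : z 1 = (⟨x₁, y₁⟩ : ℂ) * psum z 3 := by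
    rw [e1, flux, w1, w2]
    have : (⟨x₁, y₁⟩ : ℂ) = Complex.I * u * (c 1 * (⟨p, q⟩ : ℂ)
        - c 2 * (⟨1 + u * g.im, -(u * g.re)⟩ : ℂ)) := by
      apply Complex.ext <;> simp [hx₁, hy₁]
    rw [this]; ring
  have z0 : z 0 = (⟨p - x₁, q - y₁⟩ : ℂ) * psum z 3 := by
    have h : psum z 1 = psum z 0 + z 1 := psum_succ z 0
    rw [psum_zero] at h
    rw [eq_sub_of_add_eq h.symm, w1, z1]
    have : (⟨p - x₁, q - y₁⟩ : ℂ) = (⟨p, q⟩ : ℂ) - ⟨x₁, y₁⟩ := by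
      apply Complex.ext <;> simp
    rw [this]; ring
  have hN : 0 < Complex.normSq (psum z 3) := Complex.normSq_pos.mpr hw
  refine (mul_pos hN key).trans_eq ?_
  rw [z0, z1, Complex.normSq_apply]
  simp only [map_mul, Complex.mul_re, Complex.mul_im, Complex.conj_re, Complex.conj_im]
  ring

/-- The frequency-domain inequality on the whole unit circle. -/
lemma circle_pos {n : ℕ} (hn : 3 ≤ n) {c : ℕ → ℝ} {δ : ℝ} (hδ : 0 < δ)
    (hc : ∀ l, 1 ≤ l → l ≤ n → 0 < c l) (hcn : c (n + 1) = 0)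
    (hFL : ∀ x : ℕ → ℝ, (∃ m ≤ n, x m ≠ 0) → 0 < lmiForm n c δ x)
    (z : ℕ → ℂ) (ζ : ℂ) (hζ : ‖ζ‖ = 1)
    (hz : ∀ m, 1 ≤ m → m ≤ n → z m + flux (fun j => (c j : ℂ)) z m
      = ζ * (z m - flux (fun j => (c j : ℂ)) z m))
    (hne : ∃ m ≤ n, z m ≠ 0) :
    0 < δ * ((starRingEnd ℂ) (z 0) * z 0).re - c 1 * ((starRingEnd ℂ) (z 0) * z 1).re := by
  have hsq : ∀ v : ℂ, v ≠ 0 → 0 < ((starRingEnd ℂ) v * v).re := fun v hv => by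
    rw [mul_comm, Complex.mul_conj, Complex.ofReal_re]; exact Complex.normSq_pos.mpr hv
  by_cases h1 : ζ = 1
  · have hy : ∀ m, 1 ≤ m → m ≤ n → flux (fun j => (c j : ℂ)) z m = 0 := fun m hm hmn => by
      have := hz m hm hmn
      rw [h1] at this
      linear_combination this / 2
    have hw : ∀ j, j < n → psum z (n - j) = 0 := by
      intro j
      induction j with
      | zero =>
        intro h
        have h2 := hy n (by omega) le_rfl
        rw [flux, hcn] at h2
        have h3 : (c n : ℂ) ≠ 0 := by exact_mod_cast (hc n (by omega) le_rfl).ne'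
        simpa [h3] using h2
      | succ j ih =>
        intro h
        have h2 := hy (n - (j + 1)) (by omega) (by omega)
        rw [flux, show n - (j + 1) + 1 = n - j by omega, ih (by omega)] at h2
        have h3 : (c (n - (j + 1)) : ℂ) ≠ 0 := by
          exact_mod_cast (hc (n - (j + 1)) (by omega) (by omega)).ne'
        simpa [h3] using h2
    have hw' : ∀ m, 1 ≤ m → m ≤ n → psum z m = 0 := fun m hm hmn => by
      have := hw (n - m) (by omega)
      rwa [show n - (n - m) = m by omega] at this
    have hz1 : z 1 = - z 0 := by
      have h2 := hw' 1 le_rfl (by omega)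
      rw [psum_succ, psum_zero] at h2
      linear_combination h2
    have hz0 : z 0 ≠ 0 := by
      intro h0
      obtain ⟨m, hm, hzm⟩ := hne
      apply hzm
      rcases m with _ | m
      · exact h0
      · rcases m with _ | m
        · simpa [h0] using hz1
        · have h2 := hw' (m + 1 + 1) (by omega) hm
          rw [psum_succ, hw' (m + 1) (by omega) (by omega), zero_add] at h2
          exact h2
    have h2 := hsq _ hz0
    rw [hz1, mul_neg, Complex.neg_re]
    have h3 := hc 1 le_rfl (by omega)
    nlinarith [mul_pos hδ h2, mul_pos h3 h2]
  by_cases h2 : ζ = -1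
  · have hz' : ∀ m, 1 ≤ m → m ≤ n → z m = 0 := fun m hm hmn => by
      have := hz m hm hmn
      rw [h2] at this
      linear_combination this / 2
    have hz0 : z 0 ≠ 0 := by
      intro h0
      obtain ⟨m, hm, hzm⟩ := hne
      apply hzm
      rcases m with _ | m
      · exact h0
      · exact hz' _ (by omega) hm
    rw [hz' 1 le_rfl (by omega), mul_zero, Complex.zero_re, mul_zero, sub_zero]
    exact mul_pos hδ (hsq _ hz0)
  · have h1' : ζ - 1 ≠ 0 := sub_ne_zero.mpr h1
    have h2' : ζ + 1 ≠ 0 := fun h => h2 (by linear_combination h)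
    have hn1 : ζ.re * ζ.re + ζ.im * ζ.im = 1 := by
      rw [← Complex.normSq_apply, Complex.normSq_eq_norm_sq, hζ]; norm_num
    have hre : ((ζ + 1) / (ζ - 1)).re = 0 := by
      rw [Complex.div_re]
      simp only [Complex.add_re, Complex.sub_re, Complex.add_im, Complex.sub_im, Complex.one_re,
        Complex.one_im]
      rw [← add_div]
      apply div_eq_zero_iff.mpr
      left
      linear_combination hn1
    have hκ : (ζ + 1) / (ζ - 1) = Complex.I * (((ζ + 1) / (ζ - 1)).im : ℂ) := by
      apply Complex.ext <;> simp [hre]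
    refine resonance_pos hn hδ hc hcn hFL z ((ζ + 1) / (ζ - 1)).im ?_ ?_ hne
    · intro h
      rw [h] at hκ
      simp at hκ
      tauto
    · intro m hm hmn
      rw [← hκ]
      have := hz m hm hmn
      field_simp
      linear_combination -this

/-! ### The Lyapunov multiplier -/

/-- Truncated sums over `Fin (n + 1)` as partial sums. -/
lemma sum_fin_ite {R : Type*} [CommRing R] {n : ℕ} (z : ℕ → R)
    (hz : ∀ m, n < m → z m = 0) (a : R) (m : ℕ) :
    ∑ j : Fin (n + 1), (if (j : ℕ) ≤ m then a else 0) * z j = a * psum z m := by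
  rw [Fin.sum_univ_eq_sum_range (fun j => (if j ≤ m then a else 0) * z j), psum, Finset.mul_sum]
  have h1 : ∑ j ∈ Finset.range (n + 1), (if j ≤ m then a else 0) * z j
      = ∑ j ∈ Finset.range (n + 1 + (m + 1)), (if j ≤ m then a else 0) * z j :=
    Finset.sum_subset (by simp) fun j _ hj => by
      rw [hz j (by simpa using hj), mul_zero]
  have h2 : ∑ j ∈ Finset.range (m + 1), a * z j
      = ∑ j ∈ Finset.range (n + 1 + (m + 1)), (if j ≤ m then a else 0) * z j := by
    have h3 : ∑ j ∈ Finset.range (m + 1), a * z j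
        = ∑ j ∈ Finset.range (m + 1), (if j ≤ m then a else 0) * z j :=
      Finset.sum_congr rfl fun j hj => by
        rw [if_pos (Nat.lt_succ_iff.mp (Finset.mem_range.mp hj))]
    rw [h3]
    refine Finset.sum_subset (fun j hj => ?_) fun j _ hj => ?_
    · rw [Finset.mem_range] at hj ⊢; omega
    · rw [Finset.mem_range] at hj
      rw [if_neg (by omega), zero_mul]
  rw [h1, h2]

/-- Existence of a symmetric multiplier from the linear matrix inequality, via `kyp`. -/
lemma exists_multiplier_of_three_le {n : ℕ} (hn : 3 ≤ n) {c : ℕ → ℝ} {δ : ℝ} (hδ : 0 < δ)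
    (hc : ∀ l, 1 ≤ l → l ≤ n → 0 < c l) (hcn : c (n + 1) = 0)
    (hFL : ∀ x : ℕ → ℝ, (∃ m ≤ n, x m ≠ 0) → 0 < lmiForm n c δ x) :
    ∃ P : Matrix (Fin n) (Fin n) ℝ, P.IsSymm ∧ ∀ z : ℕ → ℝ, (∀ m, n < m → z m = 0) →
      (∃ m ≤ n, z m ≠ 0) → 0 < δ * z 0 ^ 2 - c 1 * z 0 * z 1
        + ∑ i : Fin n, ∑ j : Fin n, P i j * (z (i + 1) * flux c z (j + 1)) := by
  let Z : Matrix (Fin n) (Fin (n + 1)) ℝ := Matrix.of fun i j => if (j : ℕ) = i + 1 then 1 else 0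
  let Y : Matrix (Fin n) (Fin (n + 1)) ℝ := Matrix.of fun i j =>
    (if (j : ℕ) ≤ i + 1 then c (i + 1) else 0) - (if (j : ℕ) ≤ i + 2 then c (i + 2) else 0)
  let S : Matrix (Fin (n + 1)) (Fin (n + 1)) ℝ := Matrix.of fun i j =>
    if (i : ℕ) = 0 then (if (j : ℕ) = 0 then δ else if (j : ℕ) = 1 then -c 1 else 0) else 0
  let i0 : Fin (n + 1) := ⟨0, by omega⟩
  let i1 : Fin (n + 1) := ⟨1, by omega⟩
  have hS : ∀ f : Fin (n + 1) → Fin (n + 1) → ℝ,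
      ∑ i, ∑ j, S i j * f i j = δ * f i0 i0 - c 1 * f i0 i1 := fun f => by
    rw [Finset.sum_eq_single i0 (fun i _ hi => ?_) (by simp)]
    · rw [← Finset.add_sum_erase _ _ (Finset.mem_univ i0), Finset.sum_eq_single i1]
      · simp [S, i0, i1]; ring
      · intro j hj hj1
        have h0 : (j : ℕ) ≠ 0 := fun h => Finset.ne_of_mem_erase hj (Fin.ext h)
        have h1 : (j : ℕ) ≠ 1 := fun h => hj1 (Fin.ext h)
        simp only [S, Matrix.of_apply]
        rw [if_neg h0, if_neg h1, ite_self, zero_mul]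
      · intro h; exact absurd (Finset.mem_erase.mpr ⟨by simp [i0, i1], Finset.mem_univ _⟩) h
    · have h0 : (i : ℕ) ≠ 0 := fun h => hi (Fin.ext h)
      exact Finset.sum_eq_zero fun j _ => by
        simp only [S, Matrix.of_apply]
        rw [if_neg h0, zero_mul]
  have hZ : ∀ {R : Type} [CommRing R] (f : ℝ →+* R) (z : ℕ → R) (i : Fin n),
      ∑ j : Fin (n + 1), f (Z i j) * z j = z (i + 1) := fun f z i => by
    rw [Finset.sum_eq_single ⟨(i : ℕ) + 1, by omega⟩ (fun j _ hj => ?_) (by simp)]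
    · simp [Z]
    · have : (j : ℕ) ≠ i + 1 := fun h => hj (Fin.ext h)
      simp [Z, this]
  have hY : ∀ {R : Type} [CommRing R] (f : ℝ →+* R) (z : ℕ → R), (∀ m, n < m → z m = 0) →
      ∀ i : Fin n, ∑ j : Fin (n + 1), f (Y i j) * z j = flux (fun l => f (c l)) z (i + 1) := by
    intro R _ f z hz i
    rw [flux, ← sum_fin_ite z hz, ← sum_fin_ite z hz, ← Finset.sum_sub_distrib]
    refine Finset.sum_congr rfl fun j _ => ?_
    simp only [Y, Matrix.of_apply, map_sub]
    rw [apply_ite f, apply_ite f, map_zero]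
    ring
  obtain ⟨P, hP, hpos⟩ := kyp Z Y S (fun z ζ hζ hz h => by
      let x : ℕ → ℂ := fun m => if h : m < n + 1 then z ⟨m, h⟩ else 0
      have hxz : ∀ j : Fin (n + 1), x j = z j := fun j => dif_pos j.isLt
      have hx : ∀ m, n < m → x m = 0 := fun m hm => dif_neg (by omega)
      rw [hS]
      rw [show z i0 = x 0 from (hxz i0).symm, show z i1 = x 1 from (hxz i1).symm]
      refine circle_pos hn hδ hc hcn hFL x ζ hζ (fun m hm hmn => ?_) ?_
      · have h1 := h ⟨m - 1, by omega⟩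
        have hZ' := hZ Complex.ofRealHom x ⟨m - 1, by omega⟩
        have hY' := hY Complex.ofRealHom x hx ⟨m - 1, by omega⟩
        simp only [Complex.ofRealHom_eq_coe, hxz, show m - 1 + 1 = m by omega] at hZ' hY'
        simp only [Complex.ofReal_add, Complex.ofReal_sub, add_mul, sub_mul,
          Finset.sum_add_distrib, Finset.sum_sub_distrib] at h1
        rw [hZ', hY'] at h1
        exact h1
      · obtain ⟨j, hj⟩ := Function.ne_iff.mp hz
        exact ⟨j, by omega, by rwa [hxz]⟩)
    ⟨Pi.single i0 1, by
      intro h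
      simpa using congrFun h i0, by
      ext i
      simp [Matrix.mulVec_single, Z, i0]⟩
  refine ⟨P, hP, fun z hz hne => ?_⟩
  have h := hpos (fun j => z j) (by
    obtain ⟨m, hm, hzm⟩ := hne
    intro h0
    exact hzm (congrFun h0 ⟨m, by omega⟩))
  rw [hS] at h
  have hZ' : ∀ i, (Z *ᵥ fun j : Fin (n + 1) => z j) i = z (i + 1) := fun i => by
    simpa [Matrix.mulVec, dotProduct] using hZ (RingHom.id ℝ) z i
  have hY' : ∀ i, (Y *ᵥ fun j : Fin (n + 1) => z j) i = flux c z (i + 1) := fun i => by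
    simpa [Matrix.mulVec, dotProduct] using hY (RingHom.id ℝ) z hz i
  simp only [hZ', hY'] at h
  refine h.trans_eq ?_
  simp only [i0, i1]
  ring

/-- The multiplier can be taken positive definite: testing its inequality on an eigenvector shows
that every eigenvalue is positive. For `n ≤ 2` the identity works. -/
lemma exists_posDef_multiplier {n : ℕ} {c : ℕ → ℝ} {δ : ℝ} (hδ : 0 < δ)
    (hc : ∀ l, 1 ≤ l → l ≤ n → 0 < c l) (hcn : c (n + 1) = 0)
    (hFL : 2 ≤ n → ∀ x : ℕ → ℝ, (∃ m ≤ n, x m ≠ 0) → 0 < lmiForm n c δ x) :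
    ∃ P : Matrix (Fin n) (Fin n) ℝ, P.PosDef ∧ ∀ z : ℕ → ℝ, (∀ m, n < m → z m = 0) →
      (∃ m ≤ n, z m ≠ 0) → 0 < δ * z 0 ^ 2 - c 1 * z 0 * z 1
        + ∑ i : Fin n, ∑ j : Fin n, P i j * (z (i + 1) * flux c z (j + 1)) := by
  rcases Nat.lt_or_ge n 3 with hn | hn
  · refine ⟨1, Matrix.PosDef.one, fun z hz hne => ?_⟩
    have hone : ∑ i : Fin n, ∑ j : Fin n,
        (1 : Matrix (Fin n) (Fin n) ℝ) i j * (z (i + 1) * flux c z (j + 1))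
        = ∑ i ∈ Finset.range n, z (i + 1) * flux c z (i + 1) := by
      rw [← Fin.sum_univ_eq_sum_range (fun i => z (i + 1) * flux c z (i + 1))]
      refine Finset.sum_congr rfl fun i _ => ?_
      rw [Finset.sum_eq_single i (fun j _ hj => by simp [Matrix.one_apply_ne hj.symm]) (by simp)]
      simp
    rw [hone]
    interval_cases n
    · obtain ⟨m, hm, hzm⟩ := hne
      have : m = 0 := by omega
      subst this
      rw [show c 1 = 0 from hcn]
      simp only [Finset.range_zero, Finset.sum_empty]
      have : 0 < z 0 ^ 2 := by positivity
      nlinarith [mul_pos hδ this]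
    · have h1 := hc 1 le_rfl le_rfl
      have h2 : c 2 = 0 := hcn
      have hval : δ * z 0 ^ 2 - c 1 * z 0 * z 1
          + ∑ i ∈ Finset.range 1, z (i + 1) * flux c z (i + 1) = δ * z 0 ^ 2 + c 1 * z 1 ^ 2 := by
        simp [flux, psum, Finset.sum_range_succ, h2]; ring
      rw [hval]
      obtain ⟨m, hm, hzm⟩ := hne
      interval_cases m
      · have : 0 < z 0 ^ 2 := by positivity
        positivity
      · have : 0 < z 1 ^ 2 := by positivity
        positivity
    · have h1 := hc 1 le_rfl (by omega)
      have h2 := hc 2 (by omega) le_rfl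
      have h3 : c 3 = 0 := hcn
      have hval : δ * z 0 ^ 2 - c 1 * z 0 * z 1
          + ∑ i ∈ Finset.range 2, z (i + 1) * flux c z (i + 1)
          = δ * z 0 ^ 2 - c 2 * z 0 * z 1 + c 2 * z 0 * z 2 + (c 1 - c 2) * z 1 ^ 2
            + c 2 * z 2 ^ 2 := by
        simp [flux, psum, Finset.sum_range_succ, h3]; ring
      have key : ∀ a b d : ℝ, (a ≠ 0 ∨ b ≠ 0 ∨ d ≠ 0) → 0 < δ * a ^ 2 - c 1 * a * b
          + c 2 * a * d + (c 1 - c 2) * b ^ 2 + c 2 * d ^ 2 := fun a b d h => by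
        let x : ℕ → ℝ := fun m => if m = 0 then a else if m = 1 then b else d
        have hx := hFL le_rfl x (by
          rcases h with h | h | h
          · exact ⟨0, by omega, by simpa [x] using h⟩
          · exact ⟨1, by omega, by simpa [x] using h⟩
          · exact ⟨2, by omega, by simpa [x] using h⟩)
        refine hx.trans_eq ?_
        simp [lmiForm, flux, psum, Finset.sum_range_succ, h3, x]; ring
      have hd : 0 < c 1 - c 2 := by simpa using key 0 1 0 (by simp)
      rw [hval]
      -- scaling the middle coordinate by `c 2 / c 1 ≤ 1` turns one cross term into the other
      have hs : c 2 / c 1 * c 1 = c 2 := div_mul_cancel₀ _ h1.ne'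
      have hs0 : 0 < c 2 / c 1 := div_pos h2 h1
      have hs1 : c 2 / c 1 ≤ 1 := (div_le_one h1).mpr (by linarith)
      have hk := key (z 0) (c 2 / c 1 * z 1) (z 2) (by
        obtain ⟨m, hm, hzm⟩ := hne
        interval_cases m
        · exact Or.inl hzm
        · exact Or.inr (Or.inl (mul_ne_zero hs0.ne' hzm))
        · exact Or.inr (Or.inr hzm))
      have hsq : (c 2 / c 1) ^ 2 ≤ 1 := by nlinarith
      have e1 : c 1 * z 0 * (c 2 / c 1 * z 1) = c 2 * z 0 * z 1 := by
        linear_combination (z 0 * z 1) * hs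
      have e2 : (c 1 - c 2) * (c 2 / c 1 * z 1) ^ 2 ≤ (c 1 - c 2) * z 1 ^ 2 := by
        have := mul_le_mul_of_nonneg_right hsq (sq_nonneg (z 1))
        nlinarith
      linarith
  · obtain ⟨P, hP, hpos⟩ := exists_multiplier_of_three_le hn hδ hc hcn (hFL (by omega))
    have hH : P.IsHermitian := by
      rw [Matrix.IsHermitian, conjTranspose_eq_transpose_of_trivial]; exact hP
    refine ⟨P, ?_, hpos⟩
    rw [hH.posDef_iff_eigenvalues_pos]
    intro e
    let v : Fin n → ℝ := ⇑(hH.eigenvectorBasis e)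
    have hv0 : ∃ i, v i ≠ 0 := by
      by_contra! h
      apply hH.eigenvectorBasis.orthonormal.ne_zero e
      ext i
      exact h i
    have hPv : P *ᵥ v = hH.eigenvalues e • v := hH.mulVec_eigenvectorBasis e
    let z : ℕ → ℝ := fun m => if h : 1 ≤ m ∧ m ≤ n then v ⟨m - 1, by omega⟩ else 0
    have hz0 : z 0 = 0 := by simp [z]
    have hz1 : ∀ i : Fin n, z (i + 1) = v i := fun i => by
      simp only [z]
      rw [dif_pos (by omega)]
      rfl
    have hzne : ∃ m ≤ n, z m ≠ 0 := by
      obtain ⟨i, hi⟩ := hv0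
      exact ⟨i + 1, by omega, by rwa [hz1]⟩
    have h1 := hpos z (fun m hm => by simp [z]; omega) hzne
    have h2 := hFL (by omega) z hzne
    rw [lmiForm, hz0, ← Fin.sum_univ_eq_sum_range
      (fun m => z (m + 1) * (flux c z (m + 1) - (c (m + 1) - c (m + 2)) * 0))] at h2
    simp only [hz1, mul_zero, sub_zero, zero_mul, ne_eq, OfNat.ofNat_ne_zero, not_false_eq_true,
      zero_pow, add_zero, zero_add] at h2
    rw [hz0] at h1
    have h3 : ∑ i : Fin n, ∑ j : Fin n, P i j * (z (i + 1) * flux c z (j + 1))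
        = hH.eigenvalues e * ∑ j : Fin n, v j * flux c z (j + 1) := by
      rw [Finset.sum_comm, Finset.mul_sum]
      refine Finset.sum_congr rfl fun j _ => ?_
      have h4 := congrFun hPv j
      simp only [Matrix.mulVec, dotProduct, Pi.smul_apply, smul_eq_mul] at h4
      rw [← mul_assoc, ← h4, Finset.sum_mul]
      refine Finset.sum_congr rfl fun i _ => ?_
      rw [hz1, ← hP.apply i j]
      ring
    rw [h3] at h1
    simp only [ne_eq, OfNat.ofNat_ne_zero, not_false_eq_true, zero_pow, mul_zero, zero_mul,
      sub_zero, zero_add] at h1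
    exact pos_of_mul_pos_left h1 h2.le

/-! ### Coercivity of the innovation operator -/

lemma dotProduct_mulVec_le_specNorm {ι : Type*} [Fintype ι] [DecidableEq ι] (A : Matrix ι ι ℝ)
    (v : ι → ℝ) : v ⬝ᵥ (A *ᵥ v) ≤ specNorm A * ∑ i, v i ^ 2 := by
  let u : EuclideanSpace ℝ ι := WithLp.toLp 2 v
  have h1 : inner ℝ u (Matrix.toEuclideanCLM (𝕜 := ℝ) A u) = v ⬝ᵥ (A *ᵥ v) := by
    rw [EuclideanSpace.inner_eq_star_dotProduct]
    simp [u, dotProduct_comm]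
  have h2 : ‖u‖ ^ 2 = ∑ i, v i ^ 2 := by
    rw [EuclideanSpace.norm_sq_eq]
    simp [u]
  have h3 := real_inner_le_norm u (Matrix.toEuclideanCLM (𝕜 := ℝ) A u)
  have h4 := ContinuousLinearMap.le_opNorm (Matrix.toEuclideanCLM (𝕜 := ℝ) A) u
  rw [← h1, ← h2, specNorm]
  nlinarith [norm_nonneg u]

/-- The block-diagonal matrix acts blockwise, so the spectral bound controls the sum over agents
of the local quadratic forms. -/
lemma block_form_le {N K : ℕ} {Ψ : Fin N → Matrix (Fin K) (Fin K) ℝ}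
    (hΨ : ∀ i, (Ψ i).IsHermitian) {B : Matrix (Fin N × Fin K) (Fin N × Fin K) ℝ}
    (hB : ∀ p q, B p q = if p.1 = q.1 then Ψ p.1 p.2 q.2 else 0) {γ ψ : ℝ}
    (hψ : specNorm ((1 / γ) • (B * B) - B) ≤ ψ) (f : Fin N → Fin K → ℝ) :
    ∑ i, ((1 / γ) * ((Ψ i *ᵥ f i) ⬝ᵥ (Ψ i *ᵥ f i)) - f i ⬝ᵥ (Ψ i *ᵥ f i))
      ≤ ψ * ∑ i, ∑ l, f i l ^ 2 := by
  let F : Fin N × Fin K → ℝ := fun p => f p.1 p.2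
  have hBF : B *ᵥ F = fun p => (Ψ p.1 *ᵥ f p.1) p.2 := by
    ext p
    simp only [mulVec, dotProduct, Fintype.sum_prod_type, hB, F]
    rw [Finset.sum_eq_single p.1 (fun j _ hj => by simp [hj.symm]) (by simp)]
    simp
  have hBsymm : Bᵀ = B := by
    ext p q
    rw [transpose_apply, hB, hB]
    by_cases h : p.1 = q.1
    · rw [if_pos h, if_pos h.symm, h]
      have := (hΨ q.1).apply p.2 q.2
      simpa using this
    · rw [if_neg h, if_neg (Ne.symm h)]
  have h := dotProduct_mulVec_le_specNorm ((1 / γ) • (B * B) - B) F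
  have h0 : 0 ≤ ∑ p, F p ^ 2 := Finset.sum_nonneg fun p _ => sq_nonneg _
  have h1 : F ⬝ᵥ ((B * B) *ᵥ F) = (B *ᵥ F) ⬝ᵥ (B *ᵥ F) := by
    rw [← mulVec_mulVec, dotProduct_mulVec, ← mulVec_transpose, hBsymm]
  rw [sub_mulVec, smul_mulVec, dotProduct_sub, dotProduct_smul, h1, hBF] at h
  have h2 := h.trans (mul_le_mul_of_nonneg_right hψ h0)
  refine (Eq.le ?_).trans (h2.trans (Eq.le ?_))
  · simp only [dotProduct, Fintype.sum_prod_type, F, smul_eq_mul, Finset.sum_sub_distrib,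
      Finset.mul_sum]
  · simp only [Fintype.sum_prod_type, F]

/-- Coercivity of the innovation operator: splitting the output errors into their mean and a
disagreement part, the mean is controlled by the averaged measurement matrix and the disagreement
by the consensus term. -/
lemma innovation_coercive {N K : ℕ} (hN : 0 < N) {a : Fin N → Fin N → ℝ}
    {L : Matrix (Fin N) (Fin N) ℝ}
    (ha_diag : ∀ i, a i i = 0)
    (hL : ∀ i j, L i j = if i = j then ∑ l, a i l else -(a i j)) {lam2 : ℝ} (hlam2 : 0 < lam2)
    (hfiedler : ∀ v : Fin N → ℝ, (∑ i, v i) = 0 →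
      lam2 * (∑ i, v i ^ 2) ≤ v ⬝ᵥ (L *ᵥ v))
    (hL1 : L *ᵥ (fun _ => (1 : ℝ)) = 0) (hLsymm : L.IsHermitian)
    {Ψ : Fin N → Matrix (Fin K) (Fin K) ℝ}
    (hΨ : ∀ i, (Ψ i).IsHermitian) {B : Matrix (Fin N × Fin K) (Fin N × Fin K) ℝ}
    (hB : ∀ p q, B p q = if p.1 = q.1 then Ψ p.1 p.2 q.2 else 0) {γ ψ μ α : ℝ} (hγ : 0 < γ)
    (hψ : specNorm ((1 / γ) • (B * B) - B) ≤ ψ) (hα0 : 0 < α) (hα : (μ + ψ) / lam2 < α)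
    (hexc : ((N : ℝ)⁻¹ • (∑ i, Ψ i) - (μ + γ) • (1 : Matrix (Fin K) (Fin K) ℝ)).PosDef)
    (e : Fin N → Fin K → ℝ) :
    μ * ∑ i, ∑ l, e i l ^ 2
      ≤ ∑ i, e i ⬝ᵥ (Ψ i *ᵥ e i + α • ∑ j, a i j • (e i - e j)) := by
  have hN' : (0 : ℝ) < N := by exact_mod_cast hN
  let b : Fin K → ℝ := fun l => (N : ℝ)⁻¹ * ∑ i, e i l
  let f : Fin N → Fin K → ℝ := fun i => e i - b
  have hef : ∀ i, e i = b + f i := fun i => by simp [f]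
  have hf0 : ∀ l, ∑ i, f i l = 0 := fun l => by
    simp only [f, b, Pi.sub_apply, Finset.sum_sub_distrib, Finset.sum_const, Finset.card_univ,
      Fintype.card_fin, nsmul_eq_mul]
    rw [← mul_assoc, mul_inv_cancel₀ hN'.ne', one_mul, sub_self]
  -- orthogonality of the mean and the disagreement
  have hnorm : ∑ i, ∑ l, e i l ^ 2 = N * (b ⬝ᵥ b) + ∑ i, ∑ l, f i l ^ 2 := by
    have h1 : ∀ i l, e i l ^ 2 = b l * b l + 2 * b l * f i l + f i l ^ 2 := fun i l => by
      rw [hef i, Pi.add_apply]; ring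
    have h2 : ∑ i, ∑ l, 2 * b l * f i l = 0 := by
      rw [Finset.sum_comm]
      refine Finset.sum_eq_zero fun l _ => ?_
      rw [← Finset.mul_sum, hf0, mul_zero]
    simp only [h1, Finset.sum_add_distrib, h2, add_zero, dotProduct, Finset.sum_const,
      Finset.card_univ, Fintype.card_fin, nsmul_eq_mul]
  have hlap : lam2 * ∑ i, ∑ l, f i l ^ 2 ≤ ∑ i, e i ⬝ᵥ (∑ j, a i j • (e i - e j)) := by
    have h1 : ∑ i, e i ⬝ᵥ (∑ j, a i j • (e i - e j))
        = ∑ l, (fun i => f i l) ⬝ᵥ (L *ᵥ fun i => f i l) := by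
      have h2 : ∀ l i, (L *ᵥ fun i => e i l) i = ∑ j, a i j * (e i l - e j l) := fun l i => by
        simp only [mulVec, dotProduct, hL]
        rw [← Finset.add_sum_erase _ _ (Finset.mem_univ i), if_pos rfl,
          ← Finset.add_sum_erase _ (fun j => a i j * (e i l - e j l)) (Finset.mem_univ i),
          sub_self, mul_zero, zero_add, ← Finset.add_sum_erase _ (a i) (Finset.mem_univ i), ha_diag,
          zero_add, Finset.sum_mul, ← Finset.sum_add_distrib]
        refine Finset.sum_congr rfl fun j hj => ?_
        rw [if_neg (Finset.ne_of_mem_erase hj).symm]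
        ring
      have h3 : ∀ l, (fun i => e i l) ⬝ᵥ (L *ᵥ fun i => e i l)
          = (fun i => f i l) ⬝ᵥ (L *ᵥ fun i => f i l) := fun l => by
        have h4 : (fun i => e i l) = b l • (fun _ => (1 : ℝ)) + fun i => f i l := by
          ext i; simp [f]
        have h5 : (fun _ => (1 : ℝ)) ⬝ᵥ (L *ᵥ fun i => f i l) = 0 := by
          rw [dotProduct_mulVec, ← mulVec_transpose,
            show Lᵀ = L by simpa [IsHermitian] using hLsymm, hL1, zero_dotProduct]
        rw [h4, mulVec_add, mulVec_smul, hL1, smul_zero, zero_add, add_dotProduct,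
          smul_dotProduct, h5, smul_zero, zero_add]
      simp only [← h3]
      simp only [dotProduct, h2]
      rw [Finset.sum_comm]
      simp [Finset.sum_apply]
    rw [h1, Finset.sum_comm, Finset.mul_sum]
    exact Finset.sum_le_sum fun l _ => hfiedler _ (hf0 l)
  have hmean : N * (μ + γ) * (b ⬝ᵥ b) ≤ ∑ i, b ⬝ᵥ (Ψ i *ᵥ b) := by
    have h := hexc.posSemidef.dotProduct_mulVec_nonneg b
    rw [sub_mulVec, smul_mulVec, smul_mulVec, one_mulVec, dotProduct_sub, dotProduct_smul,
      dotProduct_smul, sum_mulVec, dotProduct_sum, star_trivial, smul_eq_mul, smul_eq_mul] at h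
    have h' := mul_nonneg hN'.le h
    rw [mul_sub, ← mul_assoc, mul_inv_cancel₀ hN'.ne', one_mul] at h'
    linarith
  have hblock := block_form_le hΨ hB hψ f
  have hmeas : ∑ i, b ⬝ᵥ (Ψ i *ᵥ b) - N * γ * (b ⬝ᵥ b)
      - ∑ i, ((1 / γ) * ((Ψ i *ᵥ f i) ⬝ᵥ (Ψ i *ᵥ f i)) - f i ⬝ᵥ (Ψ i *ᵥ f i))
      ≤ ∑ i, e i ⬝ᵥ (Ψ i *ᵥ e i) := by
    have h1 : N * γ * (b ⬝ᵥ b) = ∑ _i : Fin N, γ * (b ⬝ᵥ b) := by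
      simp [mul_assoc]
    rw [h1, ← Finset.sum_sub_distrib, ← Finset.sum_sub_distrib]
    refine Finset.sum_le_sum fun i _ => ?_
    have h2 : f i ⬝ᵥ (Ψ i *ᵥ b) = b ⬝ᵥ (Ψ i *ᵥ f i) := by
      rw [dotProduct_mulVec, ← mulVec_transpose,
        show (Ψ i)ᵀ = Ψ i by simpa [IsHermitian] using hΨ i, dotProduct_comm]
    have h3 : 0 ≤ γ * (b ⬝ᵥ b) + 2 * (b ⬝ᵥ (Ψ i *ᵥ f i))
        + (1 / γ) * ((Ψ i *ᵥ f i) ⬝ᵥ (Ψ i *ᵥ f i)) := by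
      simp only [dotProduct, Finset.mul_sum, ← Finset.sum_add_distrib]
      refine Finset.sum_nonneg fun l _ => ?_
      have : γ * (b l * b l) + 2 * (b l * (Ψ i *ᵥ f i) l)
          + 1 / γ * ((Ψ i *ᵥ f i) l * (Ψ i *ᵥ f i) l)
          = (1 / γ) * (γ * b l + (Ψ i *ᵥ f i) l) ^ 2 := by
        field_simp; ring
      rw [this]; positivity
    rw [hef i, mulVec_add, add_dotProduct, dotProduct_add, dotProduct_add, h2]
    linarith
  have hsplit : ∑ i, e i ⬝ᵥ (Ψ i *ᵥ e i + α • ∑ j, a i j • (e i - e j))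
      = ∑ i, e i ⬝ᵥ (Ψ i *ᵥ e i) + α * ∑ i, e i ⬝ᵥ (∑ j, a i j • (e i - e j)) := by
    rw [Finset.mul_sum, ← Finset.sum_add_distrib]
    exact Finset.sum_congr rfl fun i _ => by rw [dotProduct_add, dotProduct_smul, smul_eq_mul]
  have hα' : μ + ψ ≤ α * lam2 := ((div_lt_iff₀ hlam2).mp hα).le
  have h0 : 0 ≤ ∑ i, ∑ l, f i l ^ 2 :=
    Finset.sum_nonneg fun i _ => Finset.sum_nonneg fun l _ => sq_nonneg _
  have h1 := mul_le_mul_of_nonneg_left hlap hα0.le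
  have h2 := mul_le_mul_of_nonneg_right hα' h0
  rw [hsplit, hnorm]
  linarith

/-! ### Exponential decay -/

/-- Two positive definite continuous functions, homogeneous of degree two, are comparable. -/
lemma exists_mul_le_of_homogeneous {m : ℕ} {f g : (Fin m → ℝ) → ℝ} (hf : Continuous f)
    (hg : Continuous g) (hf2 : ∀ (a : ℝ) v, f (a • v) = a ^ 2 * f v)
    (hg2 : ∀ (a : ℝ) v, g (a • v) = a ^ 2 * g v) (hfpos : ∀ v, v ≠ 0 → 0 < f v)
    (hgpos : ∀ v, v ≠ 0 → 0 < g v) : ∃ ε > 0, ∀ v, ε * g v ≤ f v := by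
  have hf0 : f 0 = 0 := by simpa using hf2 0 0
  have hg0 : g 0 = 0 := by simpa using hg2 0 0
  have hne : ∀ v ∈ Metric.sphere (0 : Fin m → ℝ) 1, v ≠ 0 := fun v hv h => by
    simp [h] at hv
  have hcont : ContinuousOn (fun v => f v / g v) (Metric.sphere (0 : Fin m → ℝ) 1) :=
    hf.continuousOn.div hg.continuousOn fun v hv => (hgpos v (hne v hv)).ne'
  obtain ⟨ε, hε, hmin⟩ : ∃ ε > 0, ∀ v ∈ Metric.sphere (0 : Fin m → ℝ) 1, ε ≤ f v / g v := by
    rcases (Metric.sphere (0 : Fin m → ℝ) 1).eq_empty_or_nonempty with h | h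
    · exact ⟨1, one_pos, fun v hv => by simp [h] at hv⟩
    · obtain ⟨u, hu, hmin⟩ := (isCompact_sphere _ _).exists_isMinOn h hcont
      exact ⟨f u / g u, div_pos (hfpos u (hne u hu)) (hgpos u (hne u hu)), fun v hv => hmin hv⟩
  refine ⟨ε, hε, fun v => ?_⟩
  by_cases hv : v = 0
  · simp [hv, hf0, hg0]
  · have hn : 0 < ‖v‖ := norm_pos_iff.mpr hv
    have hs : ‖v‖⁻¹ • v ∈ Metric.sphere (0 : Fin m → ℝ) 1 := by
      simp [norm_smul, hn.ne']
    have h := hmin _ hs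
    rw [hf2, hg2, mul_div_mul_left _ _ (by positivity), le_div_iff₀ (hgpos v hv)] at h
    exact h

/-- Extension by zero of a vector to a sequence. -/
def extendZero {n : ℕ} (v : Fin (n + 1) → ℝ) (m : ℕ) : ℝ :=
  if h : m < n + 1 then v ⟨m, h⟩ else 0

lemma extendZero_smul {n : ℕ} (a : ℝ) (v : Fin (n + 1) → ℝ) (m : ℕ) :
    extendZero (a • v) m = a * extendZero v m := by
  unfold extendZero; split_ifs <;> simp

@[fun_prop]
lemma continuous_extendZero {n : ℕ} (m : ℕ) :
    Continuous fun v : Fin (n + 1) → ℝ => extendZero v m := by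
  unfold extendZero; split_ifs <;> fun_prop

lemma extendZero_of_lt {n : ℕ} (v : Fin (n + 1) → ℝ) (m : ℕ) (hm : n < m) : extendZero v m = 0 :=
  dif_neg (by omega)

lemma extendZero_restrict {n : ℕ} {z : ℕ → ℝ} (hz : ∀ m, n < m → z m = 0) :
    extendZero (fun j : Fin (n + 1) => z j) = z := by
  ext m
  unfold extendZero
  split_ifs with h
  · rfl
  · exact (hz m (by omega)).symm

lemma exists_extendZero_ne {n : ℕ} {v : Fin (n + 1) → ℝ} (hv : v ≠ 0) :
    ∃ m ≤ n, extendZero v m ≠ 0 := by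
  obtain ⟨j, hj⟩ := Function.ne_iff.mp hv
  refine ⟨j, by omega, ?_⟩
  rw [extendZero, dif_pos j.isLt]
  exact hj

lemma psum_smul (a : ℝ) {y z : ℕ → ℝ} (h : ∀ m, y m = a * z m) (m : ℕ) :
    psum y m = a * psum z m := by
  simp [psum, h, Finset.mul_sum]

lemma flux_smul (c : ℕ → ℝ) (a : ℝ) {y z : ℕ → ℝ} (h : ∀ m, y m = a * z m) (m : ℕ) :
    flux c y m = a * flux c z m := by
  rw [flux, flux, psum_smul a h, psum_smul a h]; ring

/-- Exponential decay of every positive definite quadratic quantity `E` along a family of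
trajectories whose increments `z m`, `1 ≤ m ≤ n`, are transported by `flux` and whose leading
components dissipate jointly. The Lyapunov function is `z 0 ^ 2` plus the form of the positive
definite multiplier in the increments, summed over the family. -/
lemma exponential_decay {ι : Type*} [Fintype ι] {n : ℕ} {c : ℕ → ℝ} {δ : ℝ}
    (hδ : 0 < δ) (hc : ∀ l, 1 ≤ l → l ≤ n → 0 < c l) (hcn : c (n + 1) = 0)
    (hFL : 2 ≤ n → ∀ x : ℕ → ℝ, (∃ m ≤ n, x m ≠ 0) → 0 < lmiForm n c δ x)
    {z : ι → ℝ → ℕ → ℝ} (hz : ∀ s t m, n < m → z s t m = 0) {g : ι → ℝ → ℝ} {t₀ : ℝ}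
    (hz0 : ∀ s t, HasDerivAt (fun τ => z s τ 0) (g s t) t)
    (hz1 : ∀ s t (j : Fin n), HasDerivAt (fun τ => z s τ (j + 1)) (-flux c (z s t) (j + 1)) t)
    (hg : ∀ t, t₀ ≤ t →
      ∑ s, z s t 0 * g s t ≤ ∑ s, (-(δ * z s t 0 ^ 2) + c 1 * z s t 0 * z s t 1))
    {E : (ℕ → ℝ) → ℝ} (hE : Continuous fun v : Fin (n + 1) → ℝ => E (extendZero v))
    (hE2 : ∀ (a : ℝ) (v : Fin (n + 1) → ℝ), E (extendZero (a • v)) = a ^ 2 * E (extendZero v))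
    (hEpos : ∀ v : Fin (n + 1) → ℝ, v ≠ 0 → 0 < E (extendZero v)) :
    ∃ C > (0 : ℝ), ∃ lam > (0 : ℝ), ∀ t, t₀ ≤ t →
      ∑ s, E (z s t) ≤ C * Real.exp (-2 * lam * (t - t₀)) * ∑ s, E (z s t₀) := by
  obtain ⟨P, hP, hform⟩ := exists_posDef_multiplier hδ hc hcn hFL
  let W : (ℕ → ℝ) → ℝ := fun z => z 0 ^ 2
    + ∑ i : Fin n, ∑ j : Fin n, P i j * (z (i + 1) * z (j + 1))
  let Q : (ℕ → ℝ) → ℝ := fun z => δ * z 0 ^ 2 - c 1 * z 0 * z 1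
    + ∑ i : Fin n, ∑ j : Fin n, P i j * (z (i + 1) * flux c z (j + 1))
  have hWc : Continuous fun v : Fin (n + 1) → ℝ => W (extendZero v) := by
    simp only [W]; fun_prop
  have hQc : Continuous fun v : Fin (n + 1) → ℝ => Q (extendZero v) := by
    simp only [Q, flux, psum]; fun_prop
  have hW2 : ∀ (a : ℝ) (v : Fin (n + 1) → ℝ),
      W (extendZero (a • v)) = a ^ 2 * W (extendZero v) := fun a v => by
    simp only [W, extendZero_smul, mul_add, Finset.mul_sum]
    congr 1
    · ring
    · exact Finset.sum_congr rfl fun i _ => Finset.sum_congr rfl fun j _ => by ring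
  have hQ2 : ∀ (a : ℝ) (v : Fin (n + 1) → ℝ),
      Q (extendZero (a • v)) = a ^ 2 * Q (extendZero v) := fun a v => by
    simp only [Q, extendZero_smul, flux_smul c a (extendZero_smul a v), mul_add, Finset.mul_sum]
    congr 1
    · ring
    · exact Finset.sum_congr rfl fun i _ => Finset.sum_congr rfl fun j _ => by ring
  have hQpos : ∀ v : Fin (n + 1) → ℝ, v ≠ 0 → 0 < Q (extendZero v) := fun v hv =>
    hform _ (extendZero_of_lt v) (exists_extendZero_ne hv)
  have hPform : ∀ u : Fin n → ℝ, ∑ i, ∑ j, P i j * (u i * u j) = u ⬝ᵥ (P *ᵥ u) := fun u => by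
    simp only [dotProduct, mulVec, Finset.mul_sum]
    exact Finset.sum_congr rfl fun i _ => Finset.sum_congr rfl fun j _ => by ring
  have hWpos : ∀ v : Fin (n + 1) → ℝ, v ≠ 0 → 0 < W (extendZero v) := fun v hv => by
    simp only [W]
    rw [hPform fun i => extendZero v (i + 1)]
    by_cases h : (fun i : Fin n => extendZero v (i + 1)) = 0
    · rw [h, zero_dotProduct, add_zero]
      obtain ⟨m, hm, hne⟩ := exists_extendZero_ne hv
      rcases m with _ | m
      · positivity
      · exact absurd (congrFun h ⟨m, by omega⟩) hne
    · have := hP.dotProduct_mulVec_pos h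
      rw [star_trivial] at this
      positivity
  obtain ⟨ε, hε, hQW⟩ := exists_mul_le_of_homogeneous hQc hWc hQ2 hW2 hQpos hWpos
  obtain ⟨ε₁, hε₁, hWE⟩ := exists_mul_le_of_homogeneous hWc hE hW2 hE2 hWpos hEpos
  obtain ⟨ε₂, hε₂, hEW⟩ := exists_mul_le_of_homogeneous hE hWc hE2 hW2 hEpos hWpos
  have ext : ∀ s t, extendZero (fun j : Fin (n + 1) => z s t j) = z s t := fun s t =>
    extendZero_restrict (hz s t)
  have hWd : ∀ s t, HasDerivAt (fun τ => W (z s τ)) (2 * (z s t 0 * g s t)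
      - 2 * ∑ i : Fin n, ∑ j : Fin n, P i j * (z s t (i + 1) * flux c (z s t) (j + 1))) t := by
    intro s t
    have h1 : HasDerivAt (fun τ => W (z s τ)) _ t := ((hz0 s t).pow 2).add
      (HasDerivAt.fun_sum fun i (_ : i ∈ Finset.univ) =>
        HasDerivAt.fun_sum fun j (_ : j ∈ Finset.univ) =>
          ((hz1 s t i).mul (hz1 s t j)).const_mul (P i j))
    refine h1.congr_deriv ?_
    have h2 : ∑ i : Fin n, ∑ j : Fin n, P i j * (flux c (z s t) (i + 1) * z s t (j + 1))
        = ∑ i : Fin n, ∑ j : Fin n, P i j * (z s t (i + 1) * flux c (z s t) (j + 1)) := by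
      rw [Finset.sum_comm]
      refine Finset.sum_congr rfl fun i _ => Finset.sum_congr rfl fun j _ => ?_
      rw [← hP.isHermitian.apply j i, star_trivial]
      ring
    simp only [mul_add, mul_neg, neg_mul, Finset.sum_add_distrib, Finset.sum_neg_distrib, h2]
    simp only [Nat.cast_ofNat, Nat.add_one_sub_one, pow_one]
    ring
  let V : ℝ → ℝ := fun t => ∑ s, W (z s t)
  let V' : ℝ → ℝ := fun t => ∑ s, (2 * (z s t 0 * g s t)
      - 2 * ∑ i : Fin n, ∑ j : Fin n, P i j * (z s t (i + 1) * flux c (z s t) (j + 1)))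
  have hVd : ∀ t, HasDerivAt V (V' t) t := fun t =>
    HasDerivAt.fun_sum fun s (_ : s ∈ Finset.univ) => hWd s t
  have hV' : ∀ t, t₀ ≤ t → V' t ≤ -(2 * ε) * V t := fun t ht => by
    have h1 := hg t ht
    have h2 : ∑ s, ε * W (z s t) ≤ ∑ s, Q (z s t) := Finset.sum_le_sum fun s _ => by
      have := hQW fun j => z s t j
      rwa [ext] at this
    have h3 : V' t = 2 * ∑ s, z s t 0 * g s t - 2 * ∑ s, ∑ i : Fin n, ∑ j : Fin n,
        P i j * (z s t (i + 1) * flux c (z s t) (j + 1)) := by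
      simp only [V', Finset.sum_sub_distrib, Finset.mul_sum]
    have h4 : ∑ s, Q (z s t) = -∑ s, (-(δ * z s t 0 ^ 2) + c 1 * z s t 0 * z s t 1)
        + ∑ s, ∑ i : Fin n, ∑ j : Fin n,
          P i j * (z s t (i + 1) * flux c (z s t) (j + 1)) := by
      rw [← Finset.sum_neg_distrib, ← Finset.sum_add_distrib]
      exact Finset.sum_congr rfl fun s _ => by simp only [Q]; ring
    rw [← Finset.mul_sum] at h2
    simp only [V]
    rw [h3]
    linarith
  have hmono : AntitoneOn (fun t => V t * Real.exp (2 * ε * (t - t₀))) (Set.Ici t₀) := by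
    have hd : ∀ t, HasDerivAt (fun t => V t * Real.exp (2 * ε * (t - t₀)))
        (V' t * Real.exp (2 * ε * (t - t₀))
          + V t * (Real.exp (2 * ε * (t - t₀)) * (2 * ε * 1))) t := fun t =>
      (hVd t).mul (((hasDerivAt_id t).sub_const t₀).const_mul (2 * ε)).exp
    refine antitoneOn_of_deriv_nonpos (convex_Ici t₀)
      (fun t _ => (hd t).continuousAt.continuousWithinAt)
      (fun t _ => (hd t).differentiableAt.differentiableWithinAt) fun t ht => ?_
    rw [interior_Ici] at ht
    rw [(hd t).deriv]
    have := mul_le_mul_of_nonneg_right (hV' t (le_of_lt ht))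
      (Real.exp_pos (2 * ε * (t - t₀))).le
    linarith
  refine ⟨ε₁⁻¹ * ε₂⁻¹, by positivity, ε, hε, fun t ht => ?_⟩
  have h1 : ∑ s, E (z s t) ≤ ε₁⁻¹ * V t := by
    simp only [V]
    rw [Finset.mul_sum]
    refine Finset.sum_le_sum fun s _ => ?_
    have := hWE fun j => z s t j
    rw [ext] at this
    rwa [le_inv_mul_iff₀ hε₁]
  have h2 : V t₀ ≤ ε₂⁻¹ * ∑ s, E (z s t₀) := by
    simp only [V]
    rw [Finset.mul_sum]
    refine Finset.sum_le_sum fun s _ => ?_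
    have := hEW fun j => z s t₀ j
    rw [ext] at this
    rwa [le_inv_mul_iff₀ hε₂]
  have h3 := hmono (Set.mem_Ici.mpr le_rfl) (Set.mem_Ici.mpr ht) ht
  simp only [sub_self, mul_zero, Real.exp_zero, mul_one] at h3
  have h4 : V t ≤ Real.exp (-2 * ε * (t - t₀)) * V t₀ := by
    have : V t = Real.exp (-2 * ε * (t - t₀)) * (V t * Real.exp (2 * ε * (t - t₀))) := by
      rw [mul_comm (V t), ← mul_assoc, ← Real.exp_add]
      simp
    rw [this]
    exact mul_le_mul_of_nonneg_left h3 (Real.exp_pos _).le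
  calc ∑ s, E (z s t) ≤ ε₁⁻¹ * (Real.exp (-2 * ε * (t - t₀)) * (ε₂⁻¹ * ∑ s, E (z s t₀))) := by
        refine h1.trans (mul_le_mul_of_nonneg_left (h4.trans ?_) (by positivity))
        exact mul_le_mul_of_nonneg_left h2 (Real.exp_pos _).le
    _ = _ := by ring

/-! ### Assembling the theorem -/

lemma sum_fin_ite_of_le {n : ℕ} (z : ℕ → ℝ) (a : ℝ) {m : ℕ} (hm : m ≤ n) :
    ∑ j : Fin (n + 1), (if (j : ℕ) ≤ m then a else 0) * z j = a * psum z m := by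
  rw [Fin.sum_univ_eq_sum_range (fun j => (if j ≤ m then a else 0) * z j), psum, Finset.mul_sum]
  have h3 : ∑ j ∈ Finset.range (m + 1), a * z j
      = ∑ j ∈ Finset.range (m + 1), (if j ≤ m then a else 0) * z j :=
    Finset.sum_congr rfl fun j hj => by
      rw [if_pos (Nat.lt_succ_iff.mp (Finset.mem_range.mp hj))]
  rw [h3]
  refine (Finset.sum_subset (fun j hj => ?_) fun j _ hj => ?_).symm
  · rw [Finset.mem_range] at hj ⊢; omega
  · rw [Finset.mem_range] at hj
    rw [if_neg (by omega), zero_mul]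

/-- The matrix inequality on the gain ratios, read backwards (`p ↦ n - p`), is positivity of
`lmiForm`. -/
lemma lmiForm_pos {n : ℕ} {k c : ℕ → ℝ} {δ : ℝ} (hc : ∀ l, l ≤ n → c l = k (l + 1) / k l)
    (hcn : c (n + 1) = 0) {S : Matrix (Fin (n + 1)) (Fin (n + 1)) ℝ}
    (hS : ∀ p q : Fin (n + 1), S p q =
      if (p : ℕ) = 0 then k (n + 1) / k (n + 1 - 1)
      else if 1 ≤ (p : ℕ) ∧ (p : ℕ) ≤ (q : ℕ) ∧ (q : ℕ) < n + 1 - 1 then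
        k (n + 1 - (p : ℕ)) / k (n + 1 - 1 - (p : ℕ))
          - k (n + 1 - (p : ℕ) + 1) / k (n + 1 - (p : ℕ))
      else if (p : ℕ) = (q : ℕ) + 1 then -(k (n + 1 - (q : ℕ)) / k (n + 1 - 1 - (q : ℕ)))
      else if (p : ℕ) = n + 1 - 1 ∧ (q : ℕ) = n + 1 - 1 then δ
      else 0)
    (hn : 0 < n) (hQ : (S + Sᵀ).PosDef) (x : ℕ → ℝ) (hx : ∃ m ≤ n, x m ≠ 0) : 0 < lmiForm n c δ x := by
  let v : Fin (n + 1) → ℝ := fun p => x (n - p)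
  have hv : v ≠ 0 := by
    obtain ⟨m, hm, hne⟩ := hx
    intro h
    apply hne
    have := congrFun h ⟨n - m, by omega⟩
    simpa [v, show n - (n - m) = m by omega] using this
  have h1 := hQ.dotProduct_mulVec_pos hv
  have h2 : v ⬝ᵥ (Sᵀ *ᵥ v) = v ⬝ᵥ (S *ᵥ v) := by
    rw [mulVec_transpose, dotProduct_comm, dotProduct_mulVec]
  rw [star_trivial, add_mulVec, dotProduct_add, h2] at h1
  have hrev : ∀ j : Fin (n + 1), ((Fin.rev j : Fin (n + 1)) : ℕ) = n - j := fun j => by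
    rw [Fin.val_rev]; omega
  have hrow : ∀ i : Fin (n + 1), (S *ᵥ v) i.rev = ∑ j : Fin (n + 1), S i.rev j.rev * x j :=
    fun i => by
      rw [mulVec, dotProduct, ← Equiv.sum_comp Fin.revPerm]
      refine Finset.sum_congr rfl fun j _ => ?_
      simp only [Fin.revPerm_apply, v, hrev]
      rw [show n - (n - (j : ℕ)) = j by omega]
  -- the rows of the reversed matrix
  have hlast : (S *ᵥ v) (Fin.last n).rev = c n * psum x n := by
    rw [hrow, ← sum_fin_ite_of_le x (c n) le_rfl]
    refine Finset.sum_congr rfl fun j _ => ?_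
    rw [hS, if_pos (by simp), if_pos (by omega), hc n le_rfl, Nat.add_sub_cancel]
  have hmid : ∀ m (hm : m < n), 1 ≤ m → (S *ᵥ v) (⟨m, by omega⟩ : Fin (n + 1)).rev
      = flux c x m - (c m - c (m + 1)) * x 0 := fun m hm hm1 => by
    have e : ∀ j : Fin (n + 1), S (⟨m, by omega⟩ : Fin (n + 1)).rev j.rev * x j
        = (if (j : ℕ) ≤ m then c m - c (m + 1) else 0) * x j
          - (if (j : ℕ) ≤ 0 then c m - c (m + 1) else 0) * x j
          - (if j = (⟨m + 1, by omega⟩ : Fin (n + 1)) then c (m + 1) * x j else 0) := fun j => by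
      rw [hS]
      simp only [hrev, Nat.add_sub_cancel, Fin.ext_iff]
      rw [if_neg (by omega)]
      have hj := j.isLt
      rcases Nat.lt_trichotomy (j : ℕ) (m + 1) with h | h | h
      · by_cases h0 : (j : ℕ) = 0
        · rw [if_neg (by omega), if_neg (by omega), if_neg (by omega), if_pos (by omega),
            if_pos (by omega), if_neg (by omega)]
          ring
        · rw [if_pos (by omega), if_pos (by omega), if_neg (by omega), if_neg (by omega),
            show n + 1 - (n - m) = m + 1 by omega, show n - (n - m) = m by omega,
            ← hc m (by omega), ← hc (m + 1) (by omega)]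
          ring
      · rw [if_neg (by omega), if_pos (by omega), if_neg (by omega), if_neg (by omega),
          if_pos h, show n + 1 - (n - (j : ℕ)) = m + 1 + 1 by omega,
          show n - (n - (j : ℕ)) = m + 1 by omega, ← hc (m + 1) (by omega)]
        ring
      · rw [if_neg (by omega), if_neg (by omega), if_neg (by omega), if_neg (by omega),
          if_neg (by omega), if_neg (by omega)]
        ring
    rw [hrow, Finset.sum_congr rfl fun j _ => e j, Finset.sum_sub_distrib,
      Finset.sum_sub_distrib, sum_fin_ite_of_le x _ hm.le, sum_fin_ite_of_le x _ (Nat.zero_le n),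
      Finset.sum_ite_eq' Finset.univ, if_pos (Finset.mem_univ _), flux, psum_succ, psum_zero]
    ring
  have hfirst : (S *ᵥ v) (⟨0, by omega⟩ : Fin (n + 1)).rev = δ * x 0 - c 1 * x 1 := by
    have e : ∀ j : Fin (n + 1), S (⟨0, by omega⟩ : Fin (n + 1)).rev j.rev * x j
        = (if (j : ℕ) ≤ 0 then δ else 0) * x j
          - (if j = (⟨1, by omega⟩ : Fin (n + 1)) then c 1 * x j else 0) := fun j => by
      rw [hS]
      simp only [hrev, Nat.add_sub_cancel, Fin.ext_iff]
      have hj := j.isLt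
      rw [if_neg (by omega), if_neg (by omega)]
      by_cases h0 : (j : ℕ) = 0
      · rw [if_neg (by omega), if_pos (by omega), if_pos (by omega), if_neg (by omega)]
        ring
      · by_cases h1 : (j : ℕ) = 1
        · rw [if_pos (by omega), if_neg (by omega), if_pos h1,
            show n + 1 - (n - (j : ℕ)) = 1 + 1 by omega, show n - (n - (j : ℕ)) = 1 by omega,
            ← hc 1 (by omega)]
          ring
        · rw [if_neg (by omega), if_neg (by omega), if_neg (by omega), if_neg h1]
          ring
    rw [hrow, Finset.sum_congr rfl fun j _ => e j, Finset.sum_sub_distrib,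
      sum_fin_ite_of_le x _ (Nat.zero_le n), Finset.sum_ite_eq' Finset.univ,
      if_pos (Finset.mem_univ _), psum_zero]
  have hsum : v ⬝ᵥ (S *ᵥ v) = ∑ i : Fin (n + 1), x i * (S *ᵥ v) i.rev := by
    rw [dotProduct, ← Equiv.sum_comp Fin.revPerm]
    refine Finset.sum_congr rfl fun j _ => ?_
    simp only [Fin.revPerm_apply, v, hrev]
    rw [show n - (n - (j : ℕ)) = j by omega]
  have hval : v ⬝ᵥ (S *ᵥ v) = lmiForm n c δ x := by
    rw [hsum, Fin.sum_univ_castSucc, hlast]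
    obtain ⟨n, rfl⟩ : ∃ n', n = n' + 1 := ⟨n - 1, by omega⟩
    rw [Fin.sum_univ_succ, lmiForm, Finset.sum_range_succ, ← Fin.sum_univ_eq_sum_range
      (fun m => x (m + 1) * (flux c x (m + 1) - (c (m + 1) - c (m + 2)) * x 0))]
    have h0 : (S *ᵥ v) (Fin.castSucc (0 : Fin (n + 1))).rev = δ * x 0 - c 1 * x 1 := hfirst
    have hi : ∀ i : Fin n, (S *ᵥ v) (Fin.castSucc (Fin.succ i)).rev
        = flux c x (i + 1) - (c (i + 1) - c (i + 2)) * x 0 := fun i =>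
      hmid (i + 1) (by omega) (by omega)
    rw [h0, Finset.sum_congr rfl fun i _ => by rw [hi i]]
    simp only [Fin.val_castSucc, Fin.val_zero, Fin.val_succ, Fin.val_last, flux, hcn]
    ring
  rw [hval] at h1
  linarith

/-- Theorem 2 of the paper: uniform global exponential stability of
the distributed consensus-based observer for a target modeled as a chain of `M`
integrators of `K`-dimensional states, over a network of `N` agents with Laplacian `L`.
Gains are indexed 1-based (`k m = k_m` for `1 ≤ m ≤ M`); the `m`-th block of a state is
indexed by `m : Fin M` (0-based, so `x t ⟨0,_⟩` is `x^{(0)}(t)`). -/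
theorem distributed_observer_uges (N K M : ℕ) (hN : 2 ≤ N) (hK : 1 ≤ K) (hM : 1 ≤ M)
    (a : Fin N → Fin N → ℝ) (ha_symm : ∀ i j, a i j = a j i)
    (ha_nonneg : ∀ i j, 0 ≤ a i j) (ha_diag : ∀ i, a i i = 0)
    (L : Matrix (Fin N) (Fin N) ℝ)
    (hL : ∀ i j, L i j = if i = j then ∑ l, a i l else -(a i j))
    (hLpsd : L.PosSemidef) (hL1 : L *ᵥ (fun _ => (1 : ℝ)) = 0)
    (lam2 : ℝ) (hlam2 : 0 < lam2)
    (hfiedler : ∀ v : Fin N → ℝ, (∑ i, v i) = 0 →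
      lam2 * (∑ i, v i ^ 2) ≤ v ⬝ᵥ (L *ᵥ v))
    (t₀ : ℝ)
    -- the target: a chain of M integrators
    (x : ℝ → Fin M → Fin K → ℝ)
    (hx : ∀ (m : Fin M) (t : ℝ), HasDerivAt (fun s => x s m)
      (if h : (m : ℕ) + 1 < M then x t ⟨(m : ℕ) + 1, h⟩ else 0) t)
    -- the measurement models
    (Ψ : Fin N → ℝ → (Fin M → Fin K → ℝ) → Matrix (Fin K) (Fin K) ℝ)
    (hΨcont : ∀ i, Continuous (fun p : ℝ × (Fin M → Fin K → ℝ) => Ψ i p.1 p.2))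
    (hΨsymm : ∀ i t v, (Ψ i t v).IsHermitian)
    (y : Fin N → ℝ → Fin K → ℝ)
    (hy : ∀ i t, y i t = (Ψ i t (x t)) *ᵥ (x t ⟨0, hM⟩))
    -- the distributed observer
    (k : ℕ → ℝ) (hk : ∀ m, 1 ≤ m → m ≤ M → 0 < k m)
    (α : ℝ) (hα0 : 0 < α)
    (xhat : Fin N → ℝ → Fin M → Fin K → ℝ)
    (dlt : Fin N → ℝ → Fin K → ℝ)
    (hdlt : ∀ i t, dlt i t =
      y i t - (Ψ i t (x t)) *ᵥ (xhat i t ⟨0, hM⟩)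
        - α • ∑ j, a i j • (xhat i t ⟨0, hM⟩ - xhat j t ⟨0, hM⟩))
    (hobs : ∀ (i : Fin N) (m : Fin M) (t : ℝ), HasDerivAt (fun s => xhat i s m)
      ((if h : (m : ℕ) + 1 < M then xhat i t ⟨(m : ℕ) + 1, h⟩ else 0)
        + k ((m : ℕ) + 1) • dlt i t) t)
    -- hypothesis (i): spatial excitation
    (δ γ : ℝ) (hδ : 0 < δ) (hγ : 0 < γ)
    (μ : ℝ) (hμ : μ = if M = 1 then δ else (δ * k 1 + k 2) / (k 1) ^ 2)
    (hexc : ∀ t, t₀ ≤ t →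
      (((N : ℝ))⁻¹ • (∑ i, Ψ i t (x t))
        - (μ + γ) • (1 : Matrix (Fin K) (Fin K) ℝ)).PosDef)
    -- hypothesis (ii): bound on the measurement matrices and consensus-gain condition
    (Ψb : ℝ → Matrix (Fin N × Fin K) (Fin N × Fin K) ℝ)
    (hΨb : ∀ t (p q : Fin N × Fin K),
      Ψb t p q = if p.1 = q.1 then Ψ p.1 t (x t) p.2 q.2 else 0)
    (ψ : ℝ) (hψ0 : 0 ≤ ψ)
    (hψ : ∀ t, t₀ ≤ t → specNorm ((1 / γ) • (Ψb t * Ψb t) - Ψb t) ≤ ψ)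
    (hα : (μ + ψ) / lam2 < α)
    -- hypothesis (iii): LMI on the gain ratios, for M ≥ 3
    (Sb : Matrix (Fin M) (Fin M) ℝ)
    (hSb : ∀ p q : Fin M, Sb p q =
      if (p : ℕ) = 0 then k M / k (M - 1)
      else if 1 ≤ (p : ℕ) ∧ (p : ℕ) ≤ (q : ℕ) ∧ (q : ℕ) < M - 1 then
        k (M - (p : ℕ)) / k (M - 1 - (p : ℕ)) - k (M - (p : ℕ) + 1) / k (M - (p : ℕ))
      else if (p : ℕ) = (q : ℕ) + 1 then -(k (M - (q : ℕ)) / k (M - 1 - (q : ℕ)))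
      else if (p : ℕ) = M - 1 ∧ (q : ℕ) = M - 1 then δ
      else 0)
    (hQbar : 3 ≤ M → (Sb + Sbᵀ).PosDef) :
    -- conclusion: exponential convergence of all estimation errors
    ∃ c > (0 : ℝ), ∃ lam > (0 : ℝ), ∀ t, t₀ ≤ t →
      (∑ i : Fin N, ∑ m : Fin M, ∑ l : Fin K, (x t m l - xhat i t m l) ^ 2)
        ≤ c * Real.exp (-2 * lam * (t - t₀)) *
          (∑ i : Fin N, ∑ m : Fin M, ∑ l : Fin K, (x t₀ m l - xhat i t₀ m l) ^ 2) := by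
  obtain ⟨n, rfl⟩ : ∃ n, M = n + 1 := ⟨M - 1, by omega⟩
  have hkpos : ∀ m, m ≤ n → 0 < k (m + 1) := fun m hm => hk _ (by omega) (by omega)
  have hk1 : 0 < k 1 := hkpos 0 (Nat.zero_le n)
  let c : ℕ → ℝ := fun l => if l ≤ n then k (l + 1) / k l else 0
  have hcdef : ∀ l, l ≤ n → c l = k (l + 1) / k l := fun l hl => if_pos hl
  have hcn : c (n + 1) = 0 := if_neg (by omega)
  have hc : ∀ l, 1 ≤ l → l ≤ n → 0 < c l := fun l h1 hl => by
    rw [hcdef l hl]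
    exact div_pos (hkpos l hl) (hk l h1 (by omega))
  -- for a single integrator the decay margin is rescaled by the gain, so that `k 1 * μ = δ' + c 1`
  let δ' : ℝ := if n = 0 then k 1 * δ else δ
  have hδ' : 0 < δ' := by
    simp only [δ']; split_ifs <;> positivity
  have hkμ : k 1 * μ = δ' + c 1 := by
    rw [hμ]
    by_cases h : n = 0
    · subst h
      simp [δ', hcn]
    · rw [if_neg (by omega), hcdef 1 (by omega)]
      simp only [δ', if_neg h]
      field_simp
  -- normalised errors, one scalar chain for each agent and coordinate, and their increments
  let w : Fin N × Fin K → ℝ → ℕ → ℝ := fun s t m =>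
    if h : m < n + 1 then (x t ⟨m, h⟩ s.2 - xhat s.1 t ⟨m, h⟩ s.2) / k (m + 1) else 0
  let z : Fin N × Fin K → ℝ → ℕ → ℝ := fun s t m =>
    if m ≤ n then (if m = 0 then w s t 0 else w s t m - w s t (m - 1)) else 0
  have hz : ∀ s t m, n < m → z s t m = 0 := fun s t m hm => if_neg (by omega)
  have hz0 : ∀ s t, z s t 0 = w s t 0 := fun s t => by simp [z]
  have hzs : ∀ s t m, m + 1 ≤ n → z s t (m + 1) = w s t (m + 1) - w s t m := fun s t m hm => by
    simp [z, hm]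
  have hpsum : ∀ s t m, m ≤ n → psum (z s t) m = w s t m := by
    intro s t m
    induction m with
    | zero => intro _; rw [psum_zero, hz0]
    | succ m ih =>
      intro hm
      rw [psum_succ, ih (by omega), hzs s t m hm]
      ring
  have hcw : ∀ s t m, m ≤ n → c (m + 1) * psum (z s t) (m + 1) = c (m + 1) * w s t (m + 1) :=
    fun s t m hm => by
    rcases Nat.lt_or_ge m n with h | h
    · rw [hpsum s t (m + 1) h]
    · rw [show m = n by omega, hcn, zero_mul, zero_mul]
  have hwd : ∀ s t m, m ≤ n → HasDerivAt (fun τ => w s τ m)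
      (c (m + 1) * w s t (m + 1) - dlt s.1 t s.2) t := by
    intro s t m hm
    have h1 := (hasDerivAt_pi.mp (hx ⟨m, by omega⟩ t)) s.2
    have h2 := (hasDerivAt_pi.mp (hobs s.1 ⟨m, by omega⟩ t)) s.2
    have h3 := (h1.sub h2).div_const (k (m + 1))
    have h4 : (fun τ => w s τ m) = fun τ =>
        (x τ ⟨m, by omega⟩ s.2 - xhat s.1 τ ⟨m, by omega⟩ s.2) / k (m + 1) := by
      ext τ; exact dif_pos (by omega)
    rw [h4]
    refine h3.congr_deriv ?_
    have hkm := (hkpos m hm).ne'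
    by_cases h : m + 1 < n + 1
    · have hkm1 := (hkpos (m + 1) (by omega)).ne'
      rw [hcdef (m + 1) (by omega)]
      simp only [w, dif_pos h, Pi.add_apply, Pi.smul_apply, smul_eq_mul]
      field_simp
      ring
    · have : c (m + 1) = 0 := if_neg (by omega)
      simp only [this, dif_neg h, Pi.add_apply, Pi.smul_apply, smul_eq_mul, Pi.zero_apply]
      field_simp
      ring
  have he0 : ∀ s t, x t ⟨0, hM⟩ s.2 - xhat s.1 t ⟨0, hM⟩ s.2 = k 1 * z s t 0 := fun s t => by
    rw [hz0]
    simp only [w, dif_pos (Nat.succ_pos n)]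
    exact (mul_div_cancel₀ _ hk1.ne').symm
  have hdiss : ∀ t, t₀ ≤ t → k 1 * μ * ∑ s, z s t 0 ^ 2
      ≤ ∑ s : Fin N × Fin K, z s t 0 * dlt s.1 t s.2 := by
    intro t ht
    have h := innovation_coercive (by omega) ha_diag hL hlam2 hfiedler hL1 hLpsd.isHermitian
      (fun i => hΨsymm i t (x t)) (hΨb t) hγ (hψ t ht) hα0 hα (hexc t ht)
      (fun i => x t ⟨0, hM⟩ - xhat i t ⟨0, hM⟩)
    have hd : ∀ i, Ψ i t (x t) *ᵥ (x t ⟨0, hM⟩ - xhat i t ⟨0, hM⟩)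
        + α • ∑ j, a i j • ((x t ⟨0, hM⟩ - xhat i t ⟨0, hM⟩) - (x t ⟨0, hM⟩ - xhat j t ⟨0, hM⟩))
        = dlt i t := fun i => by
      rw [hdlt, hy, mulVec_sub, sub_eq_add_neg (_ - _) (α • _), ← smul_neg,
        ← Finset.sum_neg_distrib]
      congr 2
      refine Finset.sum_congr rfl fun j _ => ?_
      rw [← smul_neg]
      congr 1
      abel
    simp only [hd] at h
    have e1 : ∑ i, ∑ l, (x t ⟨0, hM⟩ - xhat i t ⟨0, hM⟩) l ^ 2 = k 1 ^ 2 * ∑ s, z s t 0 ^ 2 := by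
      rw [Fintype.sum_prod_type, Finset.mul_sum]
      refine Finset.sum_congr rfl fun i _ => ?_
      rw [Finset.mul_sum]
      refine Finset.sum_congr rfl fun l _ => ?_
      rw [Pi.sub_apply, he0 (i, l) t]
      ring
    have e2 : ∑ i, (x t ⟨0, hM⟩ - xhat i t ⟨0, hM⟩) ⬝ᵥ dlt i t
        = k 1 * ∑ s : Fin N × Fin K, z s t 0 * dlt s.1 t s.2 := by
      rw [Fintype.sum_prod_type, Finset.mul_sum]
      refine Finset.sum_congr rfl fun i _ => ?_
      rw [Finset.mul_sum, dotProduct]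
      refine Finset.sum_congr rfl fun l _ => ?_
      rw [Pi.sub_apply, he0 (i, l) t]
      ring
    rw [e1, e2] at h
    refine le_of_mul_le_mul_left ?_ hk1
    linarith
  let E : (ℕ → ℝ) → ℝ := fun z => ∑ m ∈ Finset.range (n + 1), (k (m + 1) * psum z m) ^ 2
  have hEz : ∀ t, ∑ s, E (z s t)
      = ∑ i : Fin N, ∑ m : Fin (n + 1), ∑ l : Fin K, (x t m l - xhat i t m l) ^ 2 := fun t => by
    rw [Fintype.sum_prod_type]
    refine Finset.sum_congr rfl fun i _ => ?_
    refine Eq.trans ?_ Finset.sum_comm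
    refine Finset.sum_congr rfl fun l _ => ?_
    simp only [E]
    rw [← Fin.sum_univ_eq_sum_range (fun m => (k (m + 1) * psum (z (i, l) t) m) ^ 2)]
    refine Finset.sum_congr rfl fun m _ => ?_
    rw [hpsum _ _ _ (by omega)]
    simp only [w, dif_pos m.isLt]
    rw [mul_div_cancel₀ _ (hkpos m (by omega)).ne']
  obtain ⟨C, hC, lam, hlam, hdecay⟩ := exponential_decay (t₀ := t₀) hδ' hc hcn
    (fun hn y hy => by
      have hδeq : δ' = δ := if_neg (by omega)
      rw [hδeq]
      exact lmiForm_pos hcdef hcn hSb (by omega) (hQbar (by omega)) y hy)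
    hz (g := fun s t => c 1 * w s t 1 - dlt s.1 t s.2)
    (fun s t => by simpa only [hz0] using hwd s t 0 (Nat.zero_le n))
    (fun s t j => by
      have h := (hwd s t (j + 1) (by omega)).sub (hwd s t j (by omega))
      have e : (fun τ => z s τ (j + 1)) = fun τ => w s τ (j + 1) - w s τ j := by
        ext τ; exact hzs s τ j (by omega)
      rw [e]
      refine h.congr_deriv ?_
      rw [flux, hcw s t (j + 1) (by omega), hpsum s t (j + 1) (by omega)]
      ring)
    (fun t ht => by
      have h := hdiss t ht
      rw [hkμ, Finset.mul_sum] at h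
      have e : ∀ s : Fin N × Fin K, z s t 0 * (c 1 * w s t 1 - dlt s.1 t s.2)
          = (-(δ' * z s t 0 ^ 2) + c 1 * z s t 0 * z s t 1)
            + ((δ' + c 1) * z s t 0 ^ 2 - z s t 0 * dlt s.1 t s.2) := fun s => by
        have h1 := hcw s t 0 (Nat.zero_le n)
        rw [psum_succ, psum_zero, zero_add] at h1
        linear_combination -z s t 0 * h1
      simp only [e]
      rw [Finset.sum_add_distrib, Finset.sum_sub_distrib]
      linarith)
    (E := E) (by simp only [E, psum]; fun_prop)
    (fun b v => by
      simp only [E, psum_smul b (extendZero_smul b v), Finset.mul_sum]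
      exact Finset.sum_congr rfl fun m _ => by ring)
    (fun v hv => by
      obtain ⟨m, hm, hne⟩ := exists_extendZero_ne hv
      have hnn : ∀ m ∈ Finset.range (n + 1), 0 ≤ (k (m + 1) * psum (extendZero v) m) ^ 2 :=
        fun m _ => sq_nonneg _
      refine (Finset.sum_nonneg hnn).lt_of_ne' fun h0 => hne ?_
      have hp : ∀ m, m ≤ n → psum (extendZero v) m = 0 := fun m hm => by
        have h1 := (Finset.sum_eq_zero_iff_of_nonneg hnn).mp h0 m
          (Finset.mem_range.mpr (by omega))
        rw [sq_eq_zero_iff] at h1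
        exact (mul_eq_zero.mp h1).resolve_left (hkpos m hm).ne'
      rcases m with _ | m
      · exact (psum_zero _).symm.trans (hp 0 hm)
      · have h1 := psum_succ (extendZero v) m
        rw [hp (m + 1) hm, hp m (by omega), zero_add] at h1
        exact h1.symm)
  refine ⟨C, hC, lam, hlam, fun t ht => ?_⟩
  have h := hdecay t ht
  rwa [hEz, hEz] at h
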